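/- arXiv:1910.02295 — 2 statements merged into one kernel-verified Lean document; each statement's English description precedes it below -/
import Mathlib

section
/- Fix 1 < p < ∞, λ > 0, κ ≤ 0, and a ∈ ℝ. Then there exists exactly one function w : ℝ → ℝ such that: w is C¹ on ℝ; the map t ↦ |w′(t)|^{p-2} w′(t) is C¹ on ℝ; for every t ∈ ℝ the map t ↦ e^{-κ t²/2} |w′(t)|^{p-2} w′(t) has derivative equal to -λ e^{-κ t²/2} |w(t)|^{p-2} w(t); and w(a) = -1, w′(a) = 0. -/
/-- The odd power function `sgnPow q x = sign x * |x| ^ q` (with value `0` at `0`);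
for `q = p - 1` this is the function usually written `|x|^{p-2} x`. -/
noncomputable def sgnPow (q x : ℝ) : ℝ := Real.sign x * |x| ^ q

/-- `w` solves the one-dimensional model IVP: `w` is `C¹` on `ℝ`, the map
`t ↦ |w'(t)|^{p-2} w'(t)` is `C¹` on `ℝ`, the divergence-form equation
`(e^{-κ t²/2} |w'|^{p-2} w')' = -λ e^{-κ t²/2} |w|^{p-2} w` holds at every `t ∈ ℝ`,
and `w a = -1`, `w' a = 0`. -/
def IsModelSolution (p lam κ a : ℝ) (w : ℝ → ℝ) : Prop :=
  ContDiff ℝ 1 w ∧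
  ContDiff ℝ 1 (fun t => sgnPow (p - 1) (deriv w t)) ∧
  (∀ t : ℝ, HasDerivAt (fun s => Real.exp (-κ * s ^ 2 / 2) * sgnPow (p - 1) (deriv w s))
      (-lam * (Real.exp (-κ * t ^ 2 / 2) * sgnPow (p - 1) (w t))) t) ∧
  w a = -1 ∧ deriv w a = 0

open Set Filter Topology

section SgnPow

lemma sgnPow_zero (q : ℝ) : sgnPow q 0 = 0 := by simp [sgnPow]

lemma sgnPow_of_pos {q x : ℝ} (hx : 0 < x) : sgnPow q x = x ^ q := by
  simp [sgnPow, Real.sign_of_pos hx, abs_of_pos hx]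

lemma sgnPow_neg (q x : ℝ) : sgnPow q (-x) = -sgnPow q x := by
  simp [sgnPow, Real.sign_neg]

lemma sgnPow_eq_max_sub_max {q : ℝ} (hq : 0 < q) (x : ℝ) :
    sgnPow q x = max x 0 ^ q - max (-x) 0 ^ q := by
  rcases lt_trichotomy x 0 with h | rfl | h
  · rw [max_eq_right h.le, max_eq_left (by linarith), Real.zero_rpow hq.ne',
      ← sgnPow_of_pos (neg_pos.2 h), sgnPow_neg]
    ring
  · simp [sgnPow_zero]
  · rw [max_eq_left h.le, max_eq_right (by linarith), Real.zero_rpow hq.ne', sgnPow_of_pos h]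
    ring

lemma continuous_sgnPow {q : ℝ} (hq : 0 < q) : Continuous (sgnPow q) := by
  rw [funext (sgnPow_eq_max_sub_max hq)]
  exact ((continuous_id.max continuous_const).rpow_const fun _ => Or.inr hq.le).sub
    ((continuous_neg.max continuous_const).rpow_const fun _ => Or.inr hq.le)

lemma abs_sgnPow {q : ℝ} (hq : 0 < q) (x : ℝ) : |sgnPow q x| = |x| ^ q := by
  rcases lt_trichotomy x 0 with h | rfl | h
  · rw [← abs_neg, ← sgnPow_neg, sgnPow_of_pos (neg_pos.2 h), ← abs_neg x,
      abs_of_pos (neg_pos.2 h), abs_of_pos (Real.rpow_pos_of_pos (neg_pos.2 h) q)]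
  · simp [sgnPow_zero, Real.zero_rpow hq.ne']
  · rw [sgnPow_of_pos h, abs_of_pos h, abs_of_pos (Real.rpow_pos_of_pos h q)]

lemma sgnPow_ne_zero {q x : ℝ} (hq : 0 < q) (hx : x ≠ 0) : sgnPow q x ≠ 0 := by
  rw [← abs_pos, abs_sgnPow hq]
  exact Real.rpow_pos_of_pos (abs_pos.2 hx) q

lemma sgnPow_mul (q x y : ℝ) : sgnPow q (x * y) = sgnPow q x * sgnPow q y := by
  have hpos : ∀ {x y : ℝ}, 0 < x → sgnPow q (x * y) = sgnPow q x * sgnPow q y := by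
    intro x y hx
    rcases lt_trichotomy y 0 with h | rfl | h
    · have h' := neg_pos.2 h
      rw [← neg_neg y, mul_neg, sgnPow_neg, sgnPow_neg, sgnPow_of_pos (mul_pos hx h'),
        sgnPow_of_pos hx, sgnPow_of_pos h', Real.mul_rpow hx.le h'.le]
      ring
    · simp [sgnPow_zero]
    · rw [sgnPow_of_pos (mul_pos hx h), sgnPow_of_pos hx, sgnPow_of_pos h,
        Real.mul_rpow hx.le h.le]
  rcases lt_trichotomy x 0 with h | rfl | h
  · have := hpos (y := y) (neg_pos.2 h)
    rw [neg_mul, sgnPow_neg, sgnPow_neg] at this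
    linarith
  · simp [sgnPow_zero]
  · exact hpos h

lemma sgnPow_sgnPow {q r : ℝ} (hqr : q * r = 1) (x : ℝ) : sgnPow q (sgnPow r x) = x := by
  have hpos : ∀ {x : ℝ}, 0 < x → sgnPow q (sgnPow r x) = x := by
    intro x hx
    rw [sgnPow_of_pos hx, sgnPow_of_pos (Real.rpow_pos_of_pos hx r), ← Real.rpow_mul hx.le,
      mul_comm, hqr, Real.rpow_one]
  rcases lt_trichotomy x 0 with h | rfl | h
  · have := hpos (neg_pos.2 h)
    rw [sgnPow_neg, sgnPow_neg] at this
    linarith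
  · simp [sgnPow_zero]
  · exact hpos h

lemma contDiffAt_sgnPow {q x : ℝ} (hx : x ≠ 0) : ContDiffAt ℝ 1 (sgnPow q) x := by
  have hpos : ∀ {x : ℝ}, 0 < x → ContDiffAt ℝ 1 (sgnPow q) x := fun {x} h =>
    (Real.contDiffAt_rpow_const_of_ne (p := q) h.ne').congr_of_eventuallyEq
      ((eventually_gt_nhds h).mono fun y hy => sgnPow_of_pos hy)
  rcases hx.lt_or_gt with h | h
  · have : sgnPow q = fun y => -sgnPow q (-y) := by
      funext y; rw [sgnPow_neg, neg_neg]
    rw [this]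
    exact (ContDiffAt.comp x (hpos (neg_pos.2 h)) contDiff_neg.contDiffAt).neg
  · exact hpos h

/-- Near a nonzero point `sgnPow q` is Lipschitz. -/
lemma exists_eventually_abs_sgnPow_sub_le {q x : ℝ} (hx : x ≠ 0) :
    ∃ L : ℝ, 0 ≤ L ∧ ∃ s ∈ 𝓝 x, ∀ y ∈ s, ∀ z ∈ s,
      |sgnPow q y - sgnPow q z| ≤ L * |y - z| := by
  obtain ⟨K, s, hs, hK⟩ := (contDiffAt_sgnPow (q := q) hx).exists_lipschitzOnWith
  exact ⟨K, K.2, s, hs, fun y hy z hz => by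
    simpa [Real.dist_eq] using hK.dist_le_mul y hy z hz⟩

lemma hasDerivAt_abs_rpow_add_one {q : ℝ} (hq : 0 < q) (x : ℝ) :
    HasDerivAt (fun x : ℝ => |x| ^ (q + 1)) ((q + 1) * sgnPow q x) x := by
  convert hasDerivAt_abs_rpow x (p := q + 1) (by linarith) using 1
  rcases eq_or_ne x 0 with rfl | hx
  · simp [sgnPow_zero]
  · have hx' := abs_pos.2 hx
    have h1 : |x| ^ q = |x| ^ (q + 1 - 2) * |x| := by
      rw [← Real.rpow_add_one hx'.ne']; congr 1; ring
    have h2 : Real.sign x * |x| = x := by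
      rcases hx.lt_or_gt with h | h
      · rw [Real.sign_of_neg h, abs_of_neg h]; ring
      · rw [Real.sign_of_pos h, abs_of_pos h, one_mul]
    rw [sgnPow, h1]
    linear_combination (q + 1) * |x| ^ (q + 1 - 2) * h2

/-- `sgnPow q` is a locally uniform limit of bounded Lipschitz functions that it dominates. -/
lemma exists_lipschitz_approx_sgnPow {q : ℝ} (hq : 0 < q) :
    ∃ h : ℕ → ℝ → ℝ, (∀ n, ∃ K, LipschitzWith K (h n)) ∧ (∀ n, ∃ C, ∀ y, |h n y| ≤ C) ∧
      (∀ n y, |h n y| ≤ |y| ^ q) ∧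
      ∀ (l : Filter ℕ) (y : ℝ), l ≤ atTop →
        Tendsto (fun z : ℕ × ℝ => h z.1 z.2) (l ×ˢ 𝓝 y) (𝓝 (sgnPow q y)) := by
  set e : ℕ → ℝ := fun n => 1 / ((n : ℝ) + 1)
  set r : ℕ → ℝ → ℝ := fun n y => max (e n) (min (e n + n) y) with hr
  set P : ℕ → ℝ → ℝ := fun n y => r n y ^ q - e n ^ q with hP
  have e_pos : ∀ n, 0 < e n := fun n => by positivity
  have le_r : ∀ n y, e n ≤ r n y := fun n y => le_max_left _ _
  have r_le : ∀ n y, r n y ≤ e n + n := fun n y =>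
    max_le (by simp) (min_le_left _ _)
  have P_nonneg : ∀ n y, 0 ≤ P n y := fun n y =>
    sub_nonneg.2 (Real.rpow_le_rpow (e_pos n).le (le_r n y) hq.le)
  have P_zero : ∀ n y, y ≤ 0 → P n y = 0 := fun n y hy => by
    have : r n y = e n := max_eq_left ((min_le_right _ _).trans (hy.trans (e_pos n).le))
    simp [hP, this]
  have P_le : ∀ n y, 0 ≤ y → P n y ≤ y ^ q := fun n y hy => by
    have h0 : 0 ≤ e n ^ q := (Real.rpow_pos_of_pos (e_pos n) q).le
    rcases le_total (min (e n + n) y) (e n) with h | h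
    · have : r n y = e n := max_eq_left h
      simp only [hP, this, sub_self]
      exact Real.rpow_nonneg hy q
    · have h1 : r n y ≤ y := (max_eq_right h).trans_le (min_le_right _ _)
      have h2 := Real.rpow_le_rpow ((e_pos n).le.trans (le_r n y)) h1 hq.le
      simp only [hP]
      linarith
  have P_bdd : ∀ n y, P n y ≤ (e n + n) ^ q := fun n y => by
    have h0 : 0 ≤ e n ^ q := (Real.rpow_pos_of_pos (e_pos n) q).le
    have h2 := Real.rpow_le_rpow ((e_pos n).le.trans (le_r n y)) (r_le n y) hq.le
    simp only [hP]
    linarith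
  have P_lip : ∀ n, ∃ K, LipschitzWith K (P n) := fun n => by
    have hc : ContDiffOn ℝ 1 (fun x : ℝ => x ^ q) (Icc (e n) (e n + n)) := fun x hx =>
      (Real.contDiffAt_rpow_const_of_ne ((e_pos n).trans_le hx.1).ne').contDiffWithinAt
    obtain ⟨K, hK⟩ := hc.exists_lipschitzOnWith one_ne_zero (convex_Icc _ _) isCompact_Icc
    have hrl : LipschitzWith 1 (r n) := (LipschitzWith.id.const_min _).const_max _
    refine ⟨K, LipschitzWith.of_dist_le_mul fun y z => ?_⟩
    have h1 := hK.dist_le_mul (r n y) ⟨le_r n y, r_le n y⟩ (r n z) ⟨le_r n z, r_le n z⟩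
    have h2 := hrl.dist_le_mul y z
    simp only [hP, dist_sub_right]
    refine h1.trans (mul_le_mul_of_nonneg_left ?_ K.2)
    simpa using h2
  have P_lim : ∀ (l : Filter ℕ) (y : ℝ), l ≤ atTop →
      Tendsto (fun z : ℕ × ℝ => P z.1 z.2) (l ×ˢ 𝓝 y) (𝓝 (max y 0 ^ q)) := fun l y hl => by
    have h1 : Tendsto (fun z : ℕ × ℝ => e z.1) (l ×ˢ 𝓝 y) (𝓝 0) :=
      (tendsto_one_div_add_atTop_nhds_zero_nat.mono_left hl).comp tendsto_fst
    have h2 : Tendsto (fun z : ℕ × ℝ => z.2) (l ×ˢ 𝓝 y) (𝓝 y) := tendsto_snd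
    have h3 : ∀ᶠ z : ℕ × ℝ in l ×ˢ 𝓝 y, max (e z.1) z.2 = r z.1 z.2 := by
      have ha : ∀ᶠ z : ℕ × ℝ in l ×ˢ 𝓝 y, y + 1 ≤ z.1 :=
        (tendsto_natCast_atTop_atTop.comp ((tendsto_id.mono_left hl).comp tendsto_fst)
          ).eventually_ge_atTop (y + 1)
      have hb : ∀ᶠ z : ℕ × ℝ in l ×ˢ 𝓝 y, z.2 < y + 1 := h2.eventually_lt_const (by linarith)
      filter_upwards [ha, hb] with z ha hb
      have := e_pos z.1
      simp only [hr]
      rw [min_eq_right (by linarith)]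
    have h4 := ((h1.max h2).congr' h3).rpow_const (p := q) (Or.inr hq.le)
    have h5 := h1.rpow_const (p := q) (Or.inr hq.le)
    simpa [hP, Real.zero_rpow hq.ne', max_comm] using h4.sub h5
  refine ⟨fun n y => P n y - P n (-y), fun n => ?_, fun n => ⟨(e n + n) ^ q, fun y => ?_⟩,
    fun n y => ?_, fun l y hl => ?_⟩
  · obtain ⟨K, hK⟩ := P_lip n
    exact ⟨_, hK.sub (hK.comp LipschitzWith.id.neg)⟩
  · exact abs_sub_le_of_nonneg_of_le (P_nonneg _ _) (P_bdd _ _) (P_nonneg _ _) (P_bdd _ _)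
  · change |P n y - P n (-y)| ≤ _
    rcases le_total y 0 with h | h
    · rw [P_zero n y h, zero_sub, abs_neg, abs_of_nonneg (P_nonneg _ _), abs_of_nonpos h]
      exact P_le n _ (by linarith)
    · rw [P_zero n (-y) (by linarith), sub_zero, abs_of_nonneg (P_nonneg _ _), abs_of_nonneg h]
      exact P_le n _ h
  · rw [sgnPow_eq_max_sub_max hq]
    refine (P_lim l y hl).sub ((P_lim l (-y) hl).comp (f := fun z : ℕ × ℝ => (z.1, -z.2)) ?_)
    exact tendsto_fst.prodMk (tendsto_snd.neg)

end SgnPow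

section System

lemma rpow_mul_rpow_le {α β a b : ℝ} (hα : 0 < α) (hβ : 0 < β) (hαβ : α * β = 1)
    (ha : 0 ≤ a) (hb : 0 ≤ b) : a ^ β * b ^ α ≤ a ^ (β + 1) + b ^ (α + 1) := by
  rw [Real.rpow_add_one' ha (by linarith), Real.rpow_add_one' hb (by linarith)]
  have haβ := Real.rpow_nonneg ha β
  have hbα := Real.rpow_nonneg hb α
  rcases le_total (b ^ α) a with h | h
  · have := mul_le_mul_of_nonneg_left h haβ
    have := mul_nonneg hbα hb
    linarith
  · have h1 : a ^ β ≤ b := by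
      have := Real.rpow_le_rpow ha h hβ.le
      rwa [← Real.rpow_mul hb, hαβ, Real.rpow_one] at this
    have := mul_le_mul_of_nonneg_left h1 hbα
    have := mul_nonneg haβ ha
    linarith

/-- Grönwall estimate, in both time directions, for the energy `|x| ^ (β + 1) + |y| ^ (α + 1)`
of a planar system whose velocity is dominated by `(|y| ^ α, |x| ^ β)` with `α * β = 1`. -/
lemma energy_le_exp_mul_energy {α β K : ℝ} (hα : 0 < α) (hβ : 0 < β) (hαβ : α * β = 1)
    (hK : 0 ≤ K) {s : Set ℝ} (hs : Convex ℝ s) {x y x' y' : ℝ → ℝ}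
    (hx : ∀ t ∈ s, HasDerivAt x (x' t) t) (hy : ∀ t ∈ s, HasDerivAt y (y' t) t)
    (hx' : ∀ t ∈ s, |x' t| ≤ K * |y t| ^ α) (hy' : ∀ t ∈ s, |y' t| ≤ K * |x t| ^ β)
    {t₁ t₂ : ℝ} (h₁ : t₁ ∈ s) (h₂ : t₂ ∈ s) :
    |x t₂| ^ (β + 1) + |y t₂| ^ (α + 1) ≤
      Real.exp (K * (α + β + 2) * |t₂ - t₁|) * (|x t₁| ^ (β + 1) + |y t₁| ^ (α + 1)) := by
  set C := K * (α + β + 2) with hC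
  set N : ℝ → ℝ := fun t => |x t| ^ (β + 1) + |y t| ^ (α + 1)
  set N' : ℝ → ℝ := fun t =>
    (β + 1) * sgnPow β (x t) * x' t + (α + 1) * sgnPow α (y t) * y' t
  have hNd : ∀ t ∈ s, HasDerivAt N (N' t) t := fun t ht =>
    ((hasDerivAt_abs_rpow_add_one hβ (x t)).comp t (hx t ht)).add
      ((hasDerivAt_abs_rpow_add_one hα (y t)).comp t (hy t ht))
  have hN'le : ∀ t ∈ s, |N' t| ≤ C * N t := fun t ht => by
    have hY := rpow_mul_rpow_le hα hβ hαβ (abs_nonneg (x t)) (abs_nonneg (y t))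
    have hxβ := Real.rpow_nonneg (abs_nonneg (x t)) β
    have hyα := Real.rpow_nonneg (abs_nonneg (y t)) α
    have e1 : |(β + 1) * sgnPow β (x t) * x' t| ≤ (β + 1) * (|x t| ^ β * (K * |y t| ^ α)) := by
      rw [abs_mul, abs_mul, abs_sgnPow hβ, abs_of_pos (by linarith : 0 < β + 1), mul_assoc]
      gcongr
      exact hx' t ht
    have e2 : |(α + 1) * sgnPow α (y t) * y' t| ≤ (α + 1) * (|y t| ^ α * (K * |x t| ^ β)) := by
      rw [abs_mul, abs_mul, abs_sgnPow hα, abs_of_pos (by linarith : 0 < α + 1), mul_assoc]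
      gcongr
      exact hy' t ht
    have e3 : C * (|x t| ^ β * |y t| ^ α) ≤ C * N t :=
      mul_le_mul_of_nonneg_left hY (by positivity)
    calc |N' t| ≤ _ := abs_add_le _ _
      _ ≤ _ := add_le_add e1 e2
      _ = C * (|x t| ^ β * |y t| ^ α) := by rw [hC]; ring
      _ ≤ _ := e3
  have hexp : ∀ c t : ℝ, HasDerivAt (fun t => Real.exp (c * t)) (Real.exp (c * t) * c) t :=
    fun c t => by simpa using ((hasDerivAt_id t).const_mul c).exp
  have hd : ∀ c : ℝ, ∀ t ∈ s, HasDerivAt (fun t => Real.exp (c * t) * N t)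
      (Real.exp (c * t) * c * N t + Real.exp (c * t) * N' t) t := fun c t ht =>
    (hexp c t).mul (hNd t ht)
  have hcont : ∀ c : ℝ, ContinuousOn (fun t => Real.exp (c * t) * N t) s := fun c t ht =>
    (hd c t ht).continuousAt.continuousWithinAt
  have hmono : MonotoneOn (fun t => Real.exp (C * t) * N t) s :=
    monotoneOn_of_hasDerivWithinAt_nonneg hs (hcont C)
      (fun t ht => (hd C t (interior_subset ht)).hasDerivWithinAt) fun t ht => by
        have h := neg_le_of_abs_le (hN'le t (interior_subset ht))
        have := mul_nonneg (Real.exp_pos (C * t)).le (by linarith : 0 ≤ C * N t + N' t)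
        linarith
  have hanti : AntitoneOn (fun t => Real.exp (-C * t) * N t) s :=
    antitoneOn_of_hasDerivWithinAt_nonpos hs (hcont (-C))
      (fun t ht => (hd (-C) t (interior_subset ht)).hasDerivWithinAt) fun t ht => by
        have h := le_of_abs_le (hN'le t (interior_subset ht))
        have := mul_nonneg (Real.exp_pos (-C * t)).le (by linarith : 0 ≤ C * N t - N' t)
        linarith
  change N t₂ ≤ Real.exp (C * |t₂ - t₁|) * N t₁
  rcases le_total t₁ t₂ with h | h
  · have := mul_le_mul_of_nonneg_left (hanti h₁ h₂ h) (Real.exp_pos (C * t₂)).le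
    simp only [← mul_assoc, ← Real.exp_add] at this
    rw [abs_of_nonneg (by linarith)]
    rwa [show C * t₂ + -C * t₂ = 0 by ring, Real.exp_zero, one_mul,
      show C * t₂ + -C * t₁ = C * (t₂ - t₁) by ring] at this
  · have := mul_le_mul_of_nonneg_left (hmono h₂ h₁ h) (Real.exp_pos (-C * t₂)).le
    simp only [← mul_assoc, ← Real.exp_add] at this
    rw [abs_of_nonpos (by linarith)]
    rwa [show -C * t₂ + C * t₂ = 0 by ring, Real.exp_zero, one_mul,
      show -C * t₂ + C * t₁ = C * -(t₂ - t₁) by ring] at this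

/-- If `y₁`, `y₂` take the same value at `t₀` and, should that value be zero, also have the same
nonzero derivative there, then `sgnPow α ∘ y₁` and `sgnPow α ∘ y₂` differ near `t₀` by at most a
constant times the Lipschitz constant of `y₁ - y₂` at `t₀`. -/
lemma exists_eventually_abs_sgnPow_comp_sub_le {α m t₀ : ℝ} {y₁ y₂ : ℝ → ℝ} (hα : 0 < α)
    (h₁ : HasDerivAt y₁ m t₀) (h₂ : HasDerivAt y₂ m t₀) (h₀ : y₁ t₀ = y₂ t₀)
    (hm : y₁ t₀ ≠ 0 ∨ m ≠ 0) :
    ∃ L : ℝ, 0 ≤ L ∧ ∀ᶠ t in 𝓝 t₀, ∀ M : ℝ, 0 ≤ M → |y₁ t - y₂ t| ≤ M * |t - t₀| →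
      |sgnPow α (y₁ t) - sgnPow α (y₂ t)| ≤ L * M := by
  have hnear : ∀ᶠ t in 𝓝 t₀, |t - t₀| < 1 := 
    Metric.ball_mem_nhds t₀ one_pos
  by_cases hy : y₁ t₀ = 0
  · have hm := hm.resolve_left (not_not.2 hy)
    obtain ⟨L, hL, s, hs, hLs⟩ := exists_eventually_abs_sgnPow_sub_le (q := α) hm
    have hz₁ := (hasDerivAt_iff_tendsto_slope.1 h₁).eventually_mem hs
    have hz₂ := (hasDerivAt_iff_tendsto_slope.1 h₂).eventually_mem hs
    refine ⟨L, hL, ?_⟩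
    filter_upwards [eventually_nhdsWithin_iff.1 hz₁, eventually_nhdsWithin_iff.1 hz₂, hnear]
      with t ht₁ ht₂ hn M hM₀ hM
    rcases eq_or_ne t t₀ with rfl | ht
    · simpa [h₀] using mul_nonneg hL hM₀
    · have hpos : 0 < |t - t₀| := abs_pos.2 (sub_ne_zero.2 ht)
      have e₁ : y₁ t = (t - t₀) * slope y₁ t₀ t := by
        rw [slope_def_field, hy]; field_simp [sub_ne_zero.2 ht]; ring
      have e₂ : y₂ t = (t - t₀) * slope y₂ t₀ t := by
        rw [slope_def_field, ← h₀, hy]; field_simp [sub_ne_zero.2 ht]; ring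
      have hsl : |slope y₁ t₀ t - slope y₂ t₀ t| ≤ M := by
        rw [e₁, e₂, ← mul_sub, abs_mul, mul_comm M] at hM
        exact le_of_mul_le_mul_left hM hpos
      have hle := (hLs _ (ht₁ ht) _ (ht₂ ht)).trans (mul_le_mul_of_nonneg_left hsl hL)
      rw [e₁, e₂, sgnPow_mul, sgnPow_mul, ← mul_sub, abs_mul, abs_sgnPow hα]
      calc _ ≤ 1 * (L * M) := mul_le_mul (Real.rpow_le_one hpos.le hn.le hα.le) hle
            (abs_nonneg _) zero_le_one
        _ = L * M := one_mul _
  · obtain ⟨L, hL, s, hs, hLs⟩ := exists_eventually_abs_sgnPow_sub_le (q := α) hy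
    have hz₁ := h₁.continuousAt.eventually_mem hs
    have hz₂ := h₂.continuousAt.eventually_mem (h₀ ▸ hs)
    refine ⟨L, hL, ?_⟩
    filter_upwards [hz₁, hz₂, hnear] with t ht₁ ht₂ hn M hM₀ hM
    calc _ ≤ L * |y₁ t - y₂ t| := hLs _ ht₁ _ ht₂
      _ ≤ L * (M * |t - t₀|) := by gcongr
      _ ≤ L * (M * 1) := by gcongr
      _ = L * M := by rw [mul_one]

/-- `(x, y)` is a global solution of `x' = f(t) |y|^{α-1} y`, `y' = g(t) |x|^{β-1} x`. -/
def IsSgnPowSolution (α β : ℝ) (f g x y : ℝ → ℝ) : Prop :=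
  ∀ t, HasDerivAt x (f t * sgnPow α (y t)) t ∧ HasDerivAt y (g t * sgnPow β (x t)) t

namespace IsSgnPowSolution

variable {α β : ℝ} {f g x y x₁ y₁ x₂ y₂ : ℝ → ℝ}

lemma swap (h : IsSgnPowSolution α β f g x y) : IsSgnPowSolution β α g f y x :=
  fun t => (h t).symm

lemma continuous_fst (h : IsSgnPowSolution α β f g x y) : Continuous x :=
  continuous_iff_continuousAt.2 fun t => (h t).1.continuousAt

lemma continuous_snd (h : IsSgnPowSolution α β f g x y) : Continuous y := h.swap.continuous_fst

/-- A solution that is nontrivial at one time is nontrivial at all times. -/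
lemma ne_zero_or_ne_zero (h : IsSgnPowSolution α β f g x y) (hα : 0 < α) (hβ : 0 < β)
    (hαβ : α * β = 1) (hf : Continuous f) (hg : Continuous g) {t₀ : ℝ}
    (h₀ : x t₀ ≠ 0 ∨ y t₀ ≠ 0) (t : ℝ) : x t ≠ 0 ∨ y t ≠ 0 := by
  by_contra! hcon
  obtain ⟨Kf, hKf⟩ := (isCompact_uIcc (a := t) (b := t₀)).exists_bound_of_continuousOn
    hf.continuousOn
  obtain ⟨Kg, hKg⟩ := (isCompact_uIcc (a := t) (b := t₀)).exists_bound_of_continuousOn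
    hg.continuousOn
  have hle := energy_le_exp_mul_energy hα hβ hαβ (K := max 0 (max Kf Kg)) (le_max_left _ _)
    (convex_uIcc t t₀) (fun t _ => (h t).1) (fun t _ => (h t).2)
    (fun s hs => by
      rw [abs_mul, abs_sgnPow hα]
      gcongr
      exact (hKf s hs).trans ((le_max_left _ _).trans (le_max_right _ _)))
    (fun s hs => by
      rw [abs_mul, abs_sgnPow hβ]
      gcongr
      exact (hKg s hs).trans ((le_max_right _ _).trans (le_max_right _ _)))
    left_mem_uIcc right_mem_uIcc
  have hβ1 : β + 1 ≠ 0 := by linarith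
  have hα1 : α + 1 ≠ 0 := by linarith
  rw [hcon.1, hcon.2, abs_zero, Real.zero_rpow hβ1, Real.zero_rpow hα1, add_zero, mul_zero] at hle
  have hx := Real.rpow_nonneg (abs_nonneg (x t₀)) (β + 1)
  have hy := Real.rpow_nonneg (abs_nonneg (y t₀)) (α + 1)
  rcases h₀ with h₀ | h₀
  · have := Real.rpow_pos_of_pos (abs_pos.2 h₀) (β + 1)
    linarith
  · have := Real.rpow_pos_of_pos (abs_pos.2 h₀) (α + 1)
    linarith

lemma eventually_eq_of_fst_ne_zero (h₁ : IsSgnPowSolution α β f g x₁ y₁)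
    (h₂ : IsSgnPowSolution α β f g x₂ y₂) (hα : 0 < α) (hβ : 0 < β)
    (hf : Continuous f) (hg : Continuous g) {t₀ : ℝ} (hgt : g t₀ ≠ 0)
    (hx : x₁ t₀ = x₂ t₀) (hy : y₁ t₀ = y₂ t₀) (hx₀ : x₁ t₀ ≠ 0) :
    ∀ᶠ t in 𝓝 t₀, x₁ t = x₂ t ∧ y₁ t = y₂ t := by
  obtain ⟨L, hL, s, hs, hLs⟩ := exists_eventually_abs_sgnPow_sub_le (q := β) hx₀
  obtain ⟨L', hL', hev⟩ := exists_eventually_abs_sgnPow_comp_sub_le hα (h₁ t₀).2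
    (by rw [hx]; exact (h₂ t₀).2) hy (Or.inr (mul_ne_zero hgt (sgnPow_ne_zero hβ hx₀)))
  have hF : ∀ᶠ t in 𝓝 t₀, |f t| < |f t₀| + 1 :=
    hf.abs.continuousAt.eventually_lt_const (by simp)
  have hG : ∀ᶠ t in 𝓝 t₀, |g t| < |g t₀| + 1 :=
    hg.abs.continuousAt.eventually_lt_const (by simp)
  set F := |f t₀| + 1
  set G := |g t₀| + 1
  have hF₀ : 0 < F := by positivity
  have hG₀ : 0 < G := by positivity
  have hx₁ := h₁.continuous_fst.continuousAt.eventually_mem hs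
  have hx₂ := h₂.continuous_fst.continuousAt.eventually_mem (hx ▸ hs)
  obtain ⟨ε, hε, hball⟩ := Metric.eventually_nhds_iff_ball.1
    (hev.and (hF.and (hG.and (hx₁.and hx₂))))
  set A := F * (L' * (G * L)) with hA
  have hA₀ : 0 ≤ A := by positivity
  set δ := min (ε / 2) (1 / (A + 1))
  have hδ₀ : 0 < δ := by positivity
  have hδA : A * δ < 1 := by
    have h : δ * (A + 1) ≤ 1 := by
      rw [← le_div_iff₀ (by positivity)]; exact min_le_right _ _
    linarith
  set I := Metric.closedBall t₀ δ
  have hIball : ∀ t ∈ I, t ∈ Metric.ball t₀ ε := fun t ht =>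
    Metric.closedBall_subset_ball ((min_le_left _ _).trans_lt (by linarith)) ht
  have ht₀ : t₀ ∈ I := Metric.mem_closedBall_self hδ₀.le
  have hIc : Convex ℝ I := convex_closedBall _ _
  obtain ⟨r, hr, hmax⟩ := (isCompact_closedBall t₀ δ).exists_isMaxOn ⟨t₀, ht₀⟩
    (h₁.continuous_fst.sub h₂.continuous_fst).abs.continuousOn
  set D := |x₁ r - x₂ r|
  have hD₀ : 0 ≤ D := abs_nonneg _
  have hxD : ∀ t ∈ I, |x₁ t - x₂ t| ≤ D := fun t ht => hmax ht
  have hyD : ∀ t ∈ I, |y₁ t - y₂ t| ≤ G * L * D * |t - t₀| := fun t ht => by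
    have := hIc.norm_image_sub_le_of_norm_hasDerivWithin_le (C := G * L * D)
      (fun t _ => ((h₁ t).2.sub (h₂ t).2).hasDerivWithinAt) (fun t ht => ?_) ht₀ ht
    · simpa [hy] using this
    · obtain ⟨-, -, hg', hs₁, hs₂⟩ := hball t (hIball t ht)
      rw [← mul_sub, Real.norm_eq_abs, abs_mul, mul_assoc]
      refine mul_le_mul hg'.le ((hLs _ hs₁ _ hs₂).trans ?_) (abs_nonneg _) hG₀.le
      exact mul_le_mul_of_nonneg_left (hxD t ht) hL
  have hxr : D ≤ A * D * |r - t₀| := by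
    have := hIc.norm_image_sub_le_of_norm_hasDerivWithin_le (C := A * D)
      (fun t _ => ((h₁ t).1.sub (h₂ t).1).hasDerivWithinAt) (fun t ht => ?_) ht₀ hr
    · simpa [hx] using this
    · obtain ⟨hc, hf', -⟩ := hball t (hIball t ht)
      rw [← mul_sub, Real.norm_eq_abs, abs_mul, hA, mul_assoc, mul_assoc]
      exact mul_le_mul hf'.le (hc _ (by positivity) (hyD t ht)) (abs_nonneg _) hF₀.le
  have hD_zero : D = 0 := by
    have hr' : |r - t₀| ≤ δ := hr
    have h1 : A * D * |r - t₀| ≤ A * D * δ := by gcongr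
    by_contra hne
    have hpos : 0 < D := lt_of_le_of_ne hD₀ (Ne.symm hne)
    have := mul_lt_mul_of_pos_right hδA hpos
    linarith
  filter_upwards [Metric.closedBall_mem_nhds t₀ hδ₀] with t ht
  have e₁ := hxD t ht
  have e₂ := hyD t ht
  rw [hD_zero, mul_zero, zero_mul] at e₂
  rw [hD_zero] at e₁
  exact ⟨sub_eq_zero.1 (abs_nonpos_iff.1 e₁), sub_eq_zero.1 (abs_nonpos_iff.1 e₂)⟩

/-- Global uniqueness for nontrivial initial data. -/
theorem eq_of_eq_at (h₁ : IsSgnPowSolution α β f g x₁ y₁)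
    (h₂ : IsSgnPowSolution α β f g x₂ y₂) (hα : 0 < α) (hβ : 0 < β) (hαβ : α * β = 1)
    (hf : Continuous f) (hg : Continuous g) (hf₀ : ∀ t, f t ≠ 0) (hg₀ : ∀ t, g t ≠ 0) {t₀ : ℝ}
    (hx : x₁ t₀ = x₂ t₀) (hy : y₁ t₀ = y₂ t₀) (h₀ : x₁ t₀ ≠ 0 ∨ y₁ t₀ ≠ 0) :
    x₁ = x₂ ∧ y₁ = y₂ := by
  have hclopen : IsClopen {t | x₁ t = x₂ t ∧ y₁ t = y₂ t} := by
    refine ⟨(isClosed_eq h₁.continuous_fst h₂.continuous_fst).inter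
      (isClosed_eq h₁.continuous_snd h₂.continuous_snd), isOpen_iff_mem_nhds.2 ?_⟩
    rintro t ⟨hxt, hyt⟩
    rcases h₁.ne_zero_or_ne_zero hα hβ hαβ hf hg h₀ t with h | h
    · exact eventually_eq_of_fst_ne_zero h₁ h₂ hα hβ hf hg (hg₀ t) hxt hyt h
    · exact (eventually_eq_of_fst_ne_zero h₁.swap h₂.swap hβ hα hg hf (hf₀ t) hyt hxt h).mono
        fun _ => And.symm
  have huniv := hclopen.eq_univ ⟨t₀, hx, hy⟩
  exact ⟨funext fun t => (huniv.ge (mem_univ t)).1, funext fun t => (huniv.ge (mem_univ t)).2⟩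

end IsSgnPowSolution

/-- Global-in-time solvability when the nonlinearities are bounded and Lipschitz. -/
lemma exists_hasDerivAt_of_lipschitzWith_of_bounded {f g h k : ℝ → ℝ} {Kh Kk : NNReal} {Ch Ck : ℝ}
    (hf : Continuous f) (hg : Continuous g) (hh : LipschitzWith Kh h) (hk : LipschitzWith Kk k)
    (hCh : ∀ y, |h y| ≤ Ch) (hCk : ∀ x, |k x| ≤ Ck) (t₀ x₀ y₀ : ℝ) {T : ℝ} (hT : 0 ≤ T) :
    ∃ x y : ℝ → ℝ, x t₀ = x₀ ∧ y t₀ = y₀ ∧ ∀ t ∈ Ioo (t₀ - T) (t₀ + T),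
      HasDerivAt x (f t * h (y t)) t ∧ HasDerivAt y (g t * k (x t)) t := by
  have ht₀ : t₀ ∈ Icc (t₀ - T) (t₀ + T) := ⟨by linarith, by linarith⟩
  obtain ⟨Mf, hMf⟩ := (isCompact_Icc (a := t₀ - T) (b := t₀ + T)).exists_bound_of_continuousOn
    hf.continuousOn
  obtain ⟨Mg, hMg⟩ := (isCompact_Icc (a := t₀ - T) (b := t₀ + T)).exists_bound_of_continuousOn
    hg.continuousOn
  have hMf₀ : 0 ≤ Mf := (norm_nonneg _).trans (hMf t₀ ht₀)
  have hMg₀ : 0 ≤ Mg := (norm_nonneg _).trans (hMg t₀ ht₀)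
  have hCh₀ : 0 ≤ Ch := (abs_nonneg _).trans (hCh 0)
  have hCk₀ : 0 ≤ Ck := (abs_nonneg _).trans (hCk 0)
  lift Mf to NNReal using hMf₀
  lift Mg to NNReal using hMg₀
  lift Ch to NNReal using hCh₀
  lift Ck to NNReal using hCk₀
  lift T to NNReal using hT
  set L := max (Mf * Ch) (Mg * Ck)
  have hv : IsPicardLindelof (fun t (z : ℝ × ℝ) => (f t * h z.2, g t * k z.1))
      (⟨t₀, ht₀⟩ : Icc (t₀ - T) (t₀ + T)) (x₀, y₀) (L * T) 0 L (max (Mf * Kh) (Mg * Kk)) := by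
    refine ⟨fun t ht => LipschitzWith.lipschitzOnWith ?_, fun z _ => ?_, fun t ht z _ => ?_, ?_⟩
    · refine LipschitzWith.prodMk (LipschitzWith.of_dist_le_mul fun z w => ?_)
        (LipschitzWith.of_dist_le_mul fun z w => ?_)
      · rw [Real.dist_eq, ← mul_sub, abs_mul, NNReal.coe_mul, mul_assoc]
        refine mul_le_mul (hMf t ht) ?_ (abs_nonneg _) Mf.2
        exact (hh.dist_le_mul _ _).trans (mul_le_mul_of_nonneg_left (le_max_right _ _) Kh.2)
      · rw [Real.dist_eq, ← mul_sub, abs_mul, NNReal.coe_mul, mul_assoc]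
        refine mul_le_mul (hMg t ht) ?_ (abs_nonneg _) Mg.2
        exact (hk.dist_le_mul _ _).trans (mul_le_mul_of_nonneg_left (le_max_left _ _) Kk.2)
    · exact ((hf.mul continuous_const).prodMk (hg.mul continuous_const)).continuousOn
    · rw [Prod.norm_def, NNReal.coe_max]
      refine max_le_max ?_ ?_
      · rw [Real.norm_eq_abs, abs_mul]
        exact mul_le_mul (hMf t ht) (hCh _) (abs_nonneg _) Mf.2
      · rw [Real.norm_eq_abs, abs_mul]
        exact mul_le_mul (hMg t ht) (hCk _) (abs_nonneg _) Mg.2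
    · simp
  obtain ⟨z, hz₀, hz⟩ := hv.exists_eq_forall_mem_Icc_hasDerivWithinAt₀
  refine ⟨fun t => (z t).1, fun t => (z t).2, congrArg Prod.fst hz₀, congrArg Prod.snd hz₀,
    fun t ht => ?_⟩
  have := (hz t (Ioo_subset_Icc_self ht)).hasDerivAt (Icc_mem_nhds ht.1 ht.2)
  exact ⟨this.fst, this.snd⟩

lemma tendsto_uncurry_of_lipschitz_at {X : ℕ → ℝ → ℝ} {x : ℝ → ℝ} {l : Filter ℕ} [l.NeBot]
    {V : Set ℝ} {t Λ : ℝ} (hV : V ∈ 𝓝 t)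
    (hX : ∀ᶠ n in l, ∀ s ∈ V, |X n s - X n t| ≤ Λ * |s - t|)
    (hlim : ∀ s, Tendsto (fun n => X n s) l (𝓝 (x s))) :
    Tendsto (fun z : ℕ × ℝ => X z.1 z.2) (l ×ˢ 𝓝 t) (𝓝 (x t)) ∧ ContinuousAt x t := by
  have hΛ : Tendsto (fun s => Λ * |s - t|) (𝓝 t) (𝓝 0) := by
    have : Continuous fun s => Λ * |s - t| := by fun_prop
    simpa using this.tendsto t
  constructor
  · have h1 : Tendsto (fun z : ℕ × ℝ => X z.1 z.2 - X z.1 t) (l ×ˢ 𝓝 t) (𝓝 0) := by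
      refine squeeze_zero_norm' ?_ (hΛ.comp tendsto_snd)
      filter_upwards [hX.prod_mk hV] with z hz using hz.1 _ hz.2
    simpa using h1.add ((hlim t).comp tendsto_fst)
  · have h1 : Tendsto (fun s => x s - x t) (𝓝 t) (𝓝 0) := by
      refine squeeze_zero_norm' ?_ hΛ
      filter_upwards [hV] with s hs
      exact le_of_tendsto ((hlim s).sub (hlim t)).abs (hX.mono fun n hn => hn s hs)
    simpa [ContinuousAt] using h1.add_const (x t)

lemma hasDerivAt_of_tendsto_uncurry {X X' : ℕ → ℝ → ℝ} {x x' : ℝ → ℝ} {l : Filter ℕ} [l.NeBot]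
    {t : ℝ} (hX : ∀ᶠ z : ℕ × ℝ in l ×ˢ 𝓝 t, HasDerivAt (X z.1) (X' z.1 z.2) z.2)
    (hlim : ∀ s, Tendsto (fun n => X n s) l (𝓝 (x s)))
    (hX' : Tendsto (fun z : ℕ × ℝ => X' z.1 z.2) (l ×ˢ 𝓝 t) (𝓝 (x' t)))
    (hx' : ContinuousAt x' t) : HasDerivAt x (x' t) t := by
  refine hasDerivAt_of_tendstoUniformlyOnFilter (f' := X') (l := l) ?_ hX
    (Eventually.of_forall hlim)
  rw [Metric.tendstoUniformlyOnFilter_iff]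
  intro ε hε
  have := (hx'.tendsto.comp (tendsto_snd (f := l))).dist hX'
  rw [dist_self] at this
  exact this.eventually_lt_const hε

/-- Uniform bounds and Lipschitz constants for a family of planar systems dominated by
`|x'| ≤ M |y| ^ α`, `|y'| ≤ M |x| ^ β` and started from common data. -/
lemma exists_bound_and_lipschitz {α β M : ℝ} (hα : 0 < α) (hβ : 0 < β) (hαβ : α * β = 1)
    (hM : 0 ≤ M) (t₀ x₀ y₀ T : ℝ) (hT : 0 < T) :
    ∃ B Λ : ℝ, ∀ x y x' y' : ℝ → ℝ, x t₀ = x₀ → y t₀ = y₀ →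
      (∀ t ∈ Ioo (t₀ - T) (t₀ + T), HasDerivAt x (x' t) t ∧ HasDerivAt y (y' t) t ∧
        |x' t| ≤ M * |y t| ^ α ∧ |y' t| ≤ M * |x t| ^ β) →
      (∀ t ∈ Ioo (t₀ - T) (t₀ + T), |x t| ≤ B ∧ |y t| ≤ B) ∧
      ∀ s ∈ Ioo (t₀ - T) (t₀ + T), ∀ t ∈ Ioo (t₀ - T) (t₀ + T),
        |x s - x t| ≤ Λ * |s - t| ∧ |y s - y t| ≤ Λ * |s - t| := by
  set E := Real.exp (M * (α + β + 2) * T) * (|x₀| ^ (β + 1) + |y₀| ^ (α + 1))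
  have hE : 0 ≤ E := by positivity
  refine ⟨1 + E, max (M * (1 + E) ^ α) (M * (1 + E) ^ β), ?_⟩
  rintro x y x' y' rfl rfl h
  have le_of_rpow_le : ∀ {q a : ℝ}, 0 < q → 0 ≤ a → a ^ (q + 1) ≤ E → a ≤ 1 + E :=
    fun {q a} hq ha haE => by
      rcases le_total a 1 with h1 | h1
      · linarith
      · have := Real.rpow_le_rpow_of_exponent_le h1 (by linarith : 1 ≤ q + 1)
        rw [Real.rpow_one] at this
        linarith
  have ht₀ : t₀ ∈ Ioo (t₀ - T) (t₀ + T) := ⟨by linarith, by linarith⟩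
  have hB : ∀ t ∈ Ioo (t₀ - T) (t₀ + T), |x t| ≤ 1 + E ∧ |y t| ≤ 1 + E := fun t ht => by
    have hle := energy_le_exp_mul_energy hα hβ hαβ hM (convex_Ioo (t₀ - T) (t₀ + T))
      (fun t ht => (h t ht).1) (fun t ht => (h t ht).2.1) (fun t ht => (h t ht).2.2.1)
      (fun t ht => (h t ht).2.2.2) ht₀ ht
    have htT : |t - t₀| ≤ T := abs_le.2 ⟨by linarith [ht.1], by linarith [ht.2]⟩
    have hleE : |x t| ^ (β + 1) + |y t| ^ (α + 1) ≤ E := hle.trans <|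
      mul_le_mul_of_nonneg_right (Real.exp_le_exp.2 (mul_le_mul_of_nonneg_left htT (by positivity)))
        (by positivity)
    have hx := Real.rpow_nonneg (abs_nonneg (x t)) (β + 1)
    have hy := Real.rpow_nonneg (abs_nonneg (y t)) (α + 1)
    exact ⟨le_of_rpow_le hβ (abs_nonneg _) (by linarith),
      le_of_rpow_le hα (abs_nonneg _) (by linarith)⟩
  refine ⟨hB, fun s hs t ht => ⟨?_, ?_⟩⟩
  · refine (convex_Ioo (t₀ - T) (t₀ + T)).norm_image_sub_le_of_norm_hasDerivWithin_le
      (fun r hr => (h r hr).1.hasDerivWithinAt) (fun r hr => ?_) ht hs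
    refine (h r hr).2.2.1.trans (le_trans ?_ (le_max_left _ _))
    gcongr
    exact (hB r hr).2
  · refine (convex_Ioo (t₀ - T) (t₀ + T)).norm_image_sub_le_of_norm_hasDerivWithin_le
      (fun r hr => (h r hr).2.1.hasDerivWithinAt) (fun r hr => ?_) ht hs
    refine (h r hr).2.2.2.trans (le_trans ?_ (le_max_right _ _))
    gcongr
    exact (hB r hr).1

/-- Global existence. -/
theorem exists_isSgnPowSolution {α β : ℝ} {f g : ℝ → ℝ} (hα : 0 < α) (hβ : 0 < β)
    (hαβ : α * β = 1) (hf : Continuous f) (hg : Continuous g) (t₀ x₀ y₀ : ℝ) :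
    ∃ x y : ℝ → ℝ, IsSgnPowSolution α β f g x y ∧ x t₀ = x₀ ∧ y t₀ = y₀ := by
  obtain ⟨h, h_lip, h_bdd, h_le, h_lim⟩ := exists_lipschitz_approx_sgnPow hα
  obtain ⟨k, k_lip, k_bdd, k_le, k_lim⟩ := exists_lipschitz_approx_sgnPow hβ
  choose Kh h_lip using h_lip
  choose Kk k_lip using k_lip
  choose Ch h_bdd using h_bdd
  choose Ck k_bdd using k_bdd
  choose X Y hX₀ hY₀ hXY using fun n : ℕ => exists_hasDerivAt_of_lipschitzWith_of_bounded hf hg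
    (h_lip n) (k_lip n) (h_bdd n) (k_bdd n) t₀ x₀ y₀ (T := n) n.cast_nonneg
  set U := hyperfilter ℕ
  have hU : (U : Filter ℕ) ≤ atTop := Nat.hyperfilter_le_atTop
  have hsub : ∀ T : ℝ, ∀ᶠ n : ℕ in U, Ioo (t₀ - T) (t₀ + T) ⊆ Ioo (t₀ - n) (t₀ + n) := fun T =>
    ((tendsto_natCast_atTop_atTop.mono_left hU).eventually_ge_atTop T).mono fun n hn =>
      Ioo_subset_Ioo (by linarith) (by linarith)
  have huniform : ∀ T : ℝ, 0 < T → ∃ B Λ : ℝ, ∀ᶠ n in U,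
      (∀ t ∈ Ioo (t₀ - T) (t₀ + T), |X n t| ≤ B ∧ |Y n t| ≤ B) ∧
      ∀ s ∈ Ioo (t₀ - T) (t₀ + T), ∀ t ∈ Ioo (t₀ - T) (t₀ + T),
        |X n s - X n t| ≤ Λ * |s - t| ∧ |Y n s - Y n t| ≤ Λ * |s - t| := fun T hT => by
    obtain ⟨Mf, hMf⟩ := (isCompact_Icc (a := t₀ - T) (b := t₀ + T)).exists_bound_of_continuousOn
      hf.continuousOn
    obtain ⟨Mg, hMg⟩ := (isCompact_Icc (a := t₀ - T) (b := t₀ + T)).exists_bound_of_continuousOn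
      hg.continuousOn
    obtain ⟨B, Λ, hBΛ⟩ := exists_bound_and_lipschitz (M := max 0 (max Mf Mg)) hα hβ hαβ
      (le_max_left _ _) t₀ x₀ y₀ T hT
    refine ⟨B, Λ, (hsub T).mono fun n hn => hBΛ (X n) (Y n) _ _ (hX₀ n) (hY₀ n) fun t ht =>
      ⟨(hXY n t (hn ht)).1, (hXY n t (hn ht)).2, ?_, ?_⟩⟩
    · rw [abs_mul]
      exact mul_le_mul ((hMf t (Ioo_subset_Icc_self ht)).trans
        ((le_max_left _ _).trans (le_max_right _ _))) (h_le n _) (abs_nonneg _) (le_max_left _ _)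
    · rw [abs_mul]
      exact mul_le_mul ((hMg t (Ioo_subset_Icc_self ht)).trans
        ((le_max_right _ _).trans (le_max_right _ _))) (k_le n _) (abs_nonneg _) (le_max_left _ _)
  have exists_lim : ∀ {a : ℕ → ℝ} {B : ℝ}, (∀ᶠ n in U, |a n| ≤ B) → ∃ c, Tendsto a U (𝓝 c) :=
    fun {a B} ha => by
      obtain ⟨c, -, hc⟩ := (isCompact_Icc (a := -B) (b := B)).ultrafilter_le_nhds' (U.map a)
        (ha.mono fun n hn => abs_le.1 hn)
      exact ⟨c, hc⟩
  have mem_window : ∀ t : ℝ, 0 < |t - t₀| + 1 ∧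
      t ∈ Ioo (t₀ - (|t - t₀| + 1)) (t₀ + (|t - t₀| + 1)) := fun t =>
    ⟨by positivity, by linarith [neg_abs_le (t - t₀)], by linarith [le_abs_self (t - t₀)]⟩
  have hlim : ∀ t, ∃ c d, Tendsto (fun n => X n t) U (𝓝 c) ∧ Tendsto (fun n => Y n t) U (𝓝 d) :=
    fun t => by
      obtain ⟨B, Λ, hBΛ⟩ := huniform _ (mem_window t).1
      obtain ⟨c, hc⟩ := exists_lim (hBΛ.mono fun n hn => (hn.1 t (mem_window t).2).1)
      obtain ⟨d, hd⟩ := exists_lim (hBΛ.mono fun n hn => (hn.1 t (mem_window t).2).2)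
      exact ⟨c, d, hc, hd⟩
  choose x y hx hy using hlim
  refine ⟨x, y, fun t => ?_, tendsto_nhds_unique (hx t₀) (by simp [hX₀]),
    tendsto_nhds_unique (hy t₀) (by simp [hY₀])⟩
  obtain ⟨hT, ht⟩ := mem_window t
  obtain ⟨B, Λ, hBΛ⟩ := huniform _ hT
  have hV := Ioo_mem_nhds ht.1 ht.2
  obtain ⟨hXx, hxc⟩ := tendsto_uncurry_of_lipschitz_at hV
    (hBΛ.mono fun n hn s hs => (hn.2 s hs t ht).1) hx
  obtain ⟨hYy, hyc⟩ := tendsto_uncurry_of_lipschitz_at hV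
    (hBΛ.mono fun n hn s hs => (hn.2 s hs t ht).2) hy
  have hderiv : ∀ᶠ z : ℕ × ℝ in U ×ˢ 𝓝 t, HasDerivAt (X z.1) (f z.2 * h z.1 (Y z.1 z.2)) z.2 ∧
      HasDerivAt (Y z.1) (g z.2 * k z.1 (X z.1 z.2)) z.2 := by
    filter_upwards [(hsub (|t - t₀| + 1)).prod_mk hV] with z hz using hXY z.1 z.2 (hz.1 hz.2)
  constructor
  · exact hasDerivAt_of_tendsto_uncurry (hderiv.mono fun z hz => hz.1) hx
      (X' := fun n s => f s * h n (Y n s)) (x' := fun s => f s * sgnPow α (y s))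
      ((hf.continuousAt.tendsto.comp tendsto_snd).mul
        ((h_lim U (y t) hU).comp (tendsto_fst.prodMk hYy)))
      (hf.continuousAt.mul ((continuous_sgnPow hα).continuousAt.comp hyc))
  · exact hasDerivAt_of_tendsto_uncurry (hderiv.mono fun z hz => hz.2) hy
      (X' := fun n s => g s * k n (X n s)) (x' := fun s => g s * sgnPow β (x s))
      ((hg.continuousAt.tendsto.comp tendsto_snd).mul
        ((k_lim U (x t) hU).comp (tendsto_fst.prodMk hXx)))
      (hg.continuousAt.mul ((continuous_sgnPow hβ).continuousAt.comp hxc))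

end System

/-- Passing to the variables `(w, ρ |w'|^{p-2} w')` with `ρ t = e^{-κ t²/2}`. -/
lemma IsModelSolution.isSgnPowSolution {p lam κ a : ℝ} {w : ℝ → ℝ} (hp : 1 < p)
    (hw : IsModelSolution p lam κ a w) :
    IsSgnPowSolution (p - 1)⁻¹ (p - 1)
      (fun t => sgnPow (p - 1)⁻¹ (Real.exp (-κ * t ^ 2 / 2))⁻¹)
      (fun t => -lam * Real.exp (-κ * t ^ 2 / 2)) w
      (fun t => Real.exp (-κ * t ^ 2 / 2) * sgnPow (p - 1) (deriv w t)) := by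
  intro t
  refine ⟨?_, ?_⟩
  · rw [← sgnPow_mul, inv_mul_cancel_left₀ (Real.exp_pos _).ne',
      sgnPow_sgnPow (inv_mul_cancel₀ (by linarith))]
    exact (hw.1.differentiable one_ne_zero t).hasDerivAt
  · rw [mul_assoc]
    exact hw.2.2.1 t

lemma isModelSolution_of_isSgnPowSolution {p lam κ a : ℝ} {w u : ℝ → ℝ} (hp : 1 < p)
    (h : IsSgnPowSolution (p - 1)⁻¹ (p - 1)
      (fun t => sgnPow (p - 1)⁻¹ (Real.exp (-κ * t ^ 2 / 2))⁻¹)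
      (fun t => -lam * Real.exp (-κ * t ^ 2 / 2)) w u)
    (hw : w a = -1) (hu : u a = 0) : IsModelSolution p lam κ a w := by
  have hq : 0 < p - 1 := by linarith
  have hderiv : deriv w = fun t => sgnPow (p - 1)⁻¹ ((Real.exp (-κ * t ^ 2 / 2))⁻¹ * u t) := by
    funext t
    rw [(h t).1.deriv, sgnPow_mul]
  have hpow : ∀ t, sgnPow (p - 1) (deriv w t) = (Real.exp (-κ * t ^ 2 / 2))⁻¹ * u t := fun t => by
    rw [hderiv, sgnPow_sgnPow (mul_inv_cancel₀ hq.ne')]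
  have hflux : ∀ t, Real.exp (-κ * t ^ 2 / 2) * sgnPow (p - 1) (deriv w t) = u t := fun t => by
    rw [hpow, mul_inv_cancel_left₀ (Real.exp_pos _).ne']
  have hρ : ContDiff ℝ 1 fun t : ℝ => (Real.exp (-κ * t ^ 2 / 2))⁻¹ :=
    ContDiff.inv (by fun_prop) fun t => (Real.exp_pos _).ne'
  refine ⟨contDiff_one_iff_deriv.2 ⟨fun t => (h t).1.differentiableAt, ?_⟩, ?_, fun t => ?_, hw, ?_⟩
  · rw [hderiv]
    exact (continuous_sgnPow (inv_pos.2 hq)).comp (hρ.continuous.mul h.continuous_snd)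
  · simp only [hpow]
    refine hρ.mul (contDiff_one_iff_deriv.2 ⟨fun t => (h t).2.differentiableAt, ?_⟩)
    rw [funext fun t => (h t).2.deriv]
    have := (continuous_sgnPow hq).comp h.continuous_fst
    fun_prop
  · simp only [hflux, ← mul_assoc]
    exact (h t).2
  · rw [hderiv]
    simp [hu, sgnPow_zero]

/-- **Existence and uniqueness for the one-dimensional model IVP.**
Fix `1 < p < ∞`, `λ > 0`, `κ ≤ 0`, `a ∈ ℝ`. Then there is exactly one `w : ℝ → ℝ`
solving the model IVP with data `w a = -1`, `w' a = 0`. -/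
theorem existsUnique_modelSolution (p lam κ a : ℝ)
    (hp : 1 < p) (hlam : 0 < lam) (hκ : κ ≤ 0) :
    ∃! w : ℝ → ℝ, IsModelSolution p lam κ a w := by
  have hq : 0 < p - 1 := by linarith
  have hf : Continuous fun t : ℝ => sgnPow (p - 1)⁻¹ (Real.exp (-κ * t ^ 2 / 2))⁻¹ :=
    (continuous_sgnPow (inv_pos.2 hq)).comp
      (Continuous.inv₀ (by fun_prop) fun t => (Real.exp_pos _).ne')
  have hg : Continuous fun t : ℝ => -lam * Real.exp (-κ * t ^ 2 / 2) := by fun_prop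
  obtain ⟨w, u, hwu, hw, hu⟩ := exists_isSgnPowSolution (inv_pos.2 hq) hq
    (inv_mul_cancel₀ hq.ne') hf hg a (-1) 0
  refine ⟨w, isModelSolution_of_isSgnPowSolution hp hwu hw hu, fun v hv => ?_⟩
  refine ((hv.isSgnPowSolution hp).eq_of_eq_at hwu (inv_pos.2 hq) hq (inv_mul_cancel₀ hq.ne') hf hg
    (fun t => sgnPow_ne_zero (inv_pos.2 hq) (inv_ne_zero (Real.exp_pos _).ne'))
    (fun t => mul_ne_zero (neg_ne_zero.2 hlam.ne') (Real.exp_pos _).ne') (t₀ := a) ?_ ?_ ?_).1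
  · rw [hw, hv.2.2.2.1]
  · rw [hu, hv.2.2.2.2, sgnPow_zero, mul_zero]
  · left
    rw [hv.2.2.2.1]
    norm_num
end

section
/- Fix 1 < p < ∞ and D > 0, and set π_p = 2π / (p · sin(π/p)). Let μ_p(0,D) denote the infimum of (∫_{-D/2}^{D/2} |φ′(s)|^p ds)/(∫_{-D/2}^{D/2} |φ(s)|^p ds) over all Lipschitz functions φ : [-D/2, D/2] → ℝ that are not identically zero and satisfy ∫_{-D/2}^{D/2} |φ(s)|^{p-2} φ(s) ds = 0, where φ′ is the almost-everywhere derivative. Then μ_p(0,D) = (p-1) (π_p / D)^p. -/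
/-- The first nonzero Neumann eigenvalue `μ_p(κ, D)` of the one-dimensional weighted
`p`-Laplacian on `[-D/2, D/2]`, defined variationally as the infimum of the Rayleigh
quotient over Lipschitz functions, not identically zero, with vanishing weighted
`|φ|^{p-2} φ`-mean.  (Here `deriv φ` is the a.e. derivative of `φ`.) -/
noncomputable def rayleighNeumann (p κ D : ℝ) : ℝ :=
  sInf { r : ℝ | ∃ φ : ℝ → ℝ,
    (∃ K : NNReal, LipschitzOnWith K φ (Set.Icc (-(D / 2)) (D / 2))) ∧
    ¬ (∀ s ∈ Set.Icc (-(D / 2)) (D / 2), φ s = 0) ∧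
    (∫ s in (-(D / 2))..(D / 2), sgnPow (p - 1) (φ s) * Real.exp (-κ * s ^ 2 / 2)) = 0 ∧
    r = (∫ s in (-(D / 2))..(D / 2), |deriv φ s| ^ p * Real.exp (-κ * s ^ 2 / 2)) /
        (∫ s in (-(D / 2))..(D / 2), |φ s| ^ p * Real.exp (-κ * s ^ 2 / 2)) }

open Set MeasureTheory

/-- The density of the `p`-arcsine on `(-1, 1)`, extended by `1` to the real line. -/
noncomputable def arcsinDensity (p s : ℝ) : ℝ :=
  if |s| < 1 then (1 - |s| ^ p) ^ (-p⁻¹) else 1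

lemma integrableOn_and_integral_beta {u : ℝ} (h0 : 0 < u) (h1 : u < 1) :
    IntegrableOn (fun x : ℝ => x ^ (u - 1) * (1 - x) ^ (-u)) (Ioo 0 1) ∧
      ∫ x in Ioo (0 : ℝ) 1, x ^ (u - 1) * (1 - x) ^ (-u) = Real.pi / Real.sin (Real.pi * u) := by
  have hconv := Complex.betaIntegral_convergent (u := (u : ℂ)) (v := ((1 - u : ℝ) : ℂ))
    (by simpa using h0) (by simpa using h1)
  rw [intervalIntegrable_iff_integrableOn_Ioo_of_le zero_le_one] at hconv
  have hcongr : EqOn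
      (fun x : ℝ => (x : ℂ) ^ ((u : ℂ) - 1) * (1 - (x : ℂ)) ^ (((1 - u : ℝ) : ℂ) - 1))
      (fun x : ℝ => ((x ^ (u - 1) * (1 - x) ^ (-u) : ℝ) : ℂ)) (Ioo 0 1) := by
    intro x hx
    simp only
    rw [Complex.ofReal_mul, Complex.ofReal_cpow hx.1.le, Complex.ofReal_cpow (by linarith [hx.2])]
    push_cast
    ring_nf
  have hint := hconv.congr_fun hcongr measurableSet_Ioo
  refine ⟨by simpa [IntegrableOn] using hint.re, ?_⟩
  have hval := Complex.betaIntegral_eq_Gamma_mul_div (u : ℂ) ((1 - u : ℝ) : ℂ)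
    (by simpa using h0) (by simpa using h1)
  rw [Complex.betaIntegral, intervalIntegral.integral_of_le zero_le_one,
    integral_Ioc_eq_integral_Ioo, setIntegral_congr_fun measurableSet_Ioo hcongr,
    integral_complex_ofReal] at hval
  have hsum : (u : ℂ) + ((1 - u : ℝ) : ℂ) = 1 := by push_cast; ring
  rw [hsum, Complex.Gamma_one, div_one, Complex.Gamma_ofReal, Complex.Gamma_ofReal] at hval
  rw [← Real.Gamma_mul_Gamma_one_sub]
  exact_mod_cast hval

lemma arcsinDensity_unit_integral {p : ℝ} (hp : 1 < p) :
    IntervalIntegrable (arcsinDensity p) volume 0 1 ∧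
      ∫ s in (0 : ℝ)..1, arcsinDensity p s = Real.pi / (p * Real.sin (Real.pi / p)) := by
  have hp0 : 0 < p := by linarith
  obtain ⟨hi, hv⟩ := integrableOn_and_integral_beta (inv_pos.2 hp0) (inv_lt_one_of_one_lt₀ hp)
  set h : ℝ → ℝ := (Ioo (0 : ℝ) 1).indicator (fun x => x ^ (p⁻¹ - 1) * (1 - x) ^ (-p⁻¹)) with hh
  have hIoo : Ioi (0 : ℝ) ∩ Ioo 0 1 = Ioo 0 1 := by ext; simp +contextual
  have hcongr : EqOn (fun x : ℝ => (|p| * x ^ (p - 1)) • h (x ^ p))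
      ((Ioo (0 : ℝ) 1).indicator fun x => p * arcsinDensity p x) (Ioi 0) := by
    intro x (hx : 0 < x)
    by_cases hx1 : x < 1
    · have h1 : x ^ p ∈ Ioo (0 : ℝ) 1 := ⟨by positivity, Real.rpow_lt_one hx.le hx1 hp0⟩
      have h2 : x ∈ Ioo (0 : ℝ) 1 := ⟨hx, hx1⟩
      have h3 : x ^ (p - 1) * (x ^ p) ^ (p⁻¹ - 1) = 1 := by
        rw [← Real.rpow_mul hx.le, ← Real.rpow_add hx]
        have : p - 1 + p * (p⁻¹ - 1) = 0 := by field_simp; ring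
        rw [this, Real.rpow_zero]
      simp only [hh, indicator_of_mem h1, indicator_of_mem h2, arcsinDensity, abs_of_pos hx,
        abs_of_pos hp0, hx1, if_true, smul_eq_mul]
      linear_combination (p * (1 - x ^ p) ^ (-p⁻¹)) * h3
    · have h1 : x ^ p ∉ Ioo (0 : ℝ) 1 := fun h => by
        have := Real.one_le_rpow (not_lt.1 hx1) hp0.le
        linarith [h.2]
      have h2 : x ∉ Ioo (0 : ℝ) 1 := fun h => hx1 h.2
      simp [hh, indicator_of_notMem h1, indicator_of_notMem h2]
  constructor
  · have h1 : IntegrableOn h (Ioi 0) := by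
      rw [hh, integrableOn_indicator_iff measurableSet_Ioo, inter_comm, hIoo]
      exact hi
    have h2 := ((integrableOn_Ioi_comp_rpow_iff h hp0.ne').2 h1).congr_fun hcongr measurableSet_Ioi
    rw [integrableOn_indicator_iff measurableSet_Ioo, inter_comm, hIoo] at h2
    rw [intervalIntegrable_iff_integrableOn_Ioo_of_le zero_le_one]
    have h3 := h2.const_mul p⁻¹
    simpa [IntegrableOn, ← mul_assoc, inv_mul_cancel₀ hp0.ne'] using h3
  · have h1 := integral_comp_rpow_Ioi h hp0.ne'
    rw [setIntegral_congr_fun measurableSet_Ioi hcongr, hh,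
      setIntegral_indicator measurableSet_Ioo, setIntegral_indicator measurableSet_Ioo, hIoo, hv,
      integral_const_mul] at h1
    rw [intervalIntegral.integral_of_le zero_le_one, integral_Ioc_eq_integral_Ioo]
    rw [← div_eq_mul_inv] at h1
    field_simp at h1 ⊢
    linarith

lemma arcsinDensity_neg (p s : ℝ) : arcsinDensity p (-s) = arcsinDensity p s := by
  simp [arcsinDensity]

lemma one_le_arcsinDensity {p : ℝ} (hp : 0 < p) (s : ℝ) : 1 ≤ arcsinDensity p s := by
  unfold arcsinDensity
  split_ifs with h
  · have h1 : |s| ^ p < 1 := Real.rpow_lt_one (abs_nonneg s) h hp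
    have h2 : 0 ≤ |s| ^ p := by positivity
    exact Real.one_le_rpow_of_pos_of_le_one_of_nonpos (by linarith) (by linarith)
      (by simpa using hp.le)
  · exact le_rfl

lemma arcsinDensity_intervalIntegrable {p : ℝ} (hp : 1 < p) (a b : ℝ) :
    IntervalIntegrable (arcsinDensity p) volume a b := by
  have h : ∀ x, IntervalIntegrable (arcsinDensity p) volume 0 x := by
    refine fun x => intervalIntegrable_of_even (fun x => (arcsinDensity_neg p x).symm)
      (fun x hx => ?_) (by simp) (by simp)
    rcases le_total x 1 with hx1 | hx1
    · exact (arcsinDensity_unit_integral hp).1.mono_set (by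
        rw [uIcc_of_le hx.le, uIcc_of_le zero_le_one]; exact Icc_subset_Icc_right hx1)
    · refine (arcsinDensity_unit_integral hp).1.trans ?_
      refine (intervalIntegrable_const (c := (1 : ℝ))).congr fun s hs => ?_
      rw [uIoc_of_le hx1] at hs
      simp [arcsinDensity, not_lt.2 (hs.1.le.trans (le_abs_self s))]
  exact (h a).symm.trans (h b)

/-- The `p`-arcsine, extended to an increasing bijection of the real line. -/
noncomputable def arcsinIntegral (p t : ℝ) : ℝ := ∫ s in (0 : ℝ)..t, arcsinDensity p s

lemma arcsinIntegral_neg (p t : ℝ) : arcsinIntegral p (-t) = -arcsinIntegral p t := by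
  unfold arcsinIntegral
  have := intervalIntegral.integral_comp_neg (a := 0) (b := t) (arcsinDensity p)
  simp only [arcsinDensity_neg, neg_zero] at this
  rw [this, intervalIntegral.integral_symm]

lemma sub_le_arcsinIntegral_sub {p : ℝ} (hp : 1 < p) {a b : ℝ} (hab : a ≤ b) :
    b - a ≤ arcsinIntegral p b - arcsinIntegral p a := by
  unfold arcsinIntegral
  rw [intervalIntegral.integral_interval_sub_left (arcsinDensity_intervalIntegrable hp _ _)
    (arcsinDensity_intervalIntegrable hp _ _)]
  have := intervalIntegral.integral_mono_on hab (intervalIntegrable_const (c := (1 : ℝ)))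
    (arcsinDensity_intervalIntegrable hp _ _)
    fun x _ => one_le_arcsinDensity (by linarith : 0 < p) x
  simpa using this

lemma arcsinIntegral_strictMono {p : ℝ} (hp : 1 < p) : StrictMono (arcsinIntegral p) :=
  fun a b hab => by linarith [sub_le_arcsinIntegral_sub hp hab.le]

lemma arcsinIntegral_continuous {p : ℝ} (hp : 1 < p) : Continuous (arcsinIntegral p) :=
  intervalIntegral.continuous_primitive (arcsinDensity_intervalIntegrable hp) 0

lemma arcsinIntegral_surjective {p : ℝ} (hp : 1 < p) : Function.Surjective (arcsinIntegral p) := by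
  have h0 : arcsinIntegral p 0 = 0 := by simp [arcsinIntegral]
  refine (arcsinIntegral_continuous hp).surjective ?_ ?_
  · refine Filter.tendsto_atTop_mono' _ ?_ Filter.tendsto_id
    filter_upwards [Filter.eventually_ge_atTop 0] with x hx
    simpa [h0] using sub_le_arcsinIntegral_sub hp hx
  · refine Filter.tendsto_atBot_mono' _ ?_ Filter.tendsto_id
    filter_upwards [Filter.eventually_le_atBot 0] with x hx
    simpa [h0] using sub_le_arcsinIntegral_sub hp hx

lemma arcsinIntegral_hasDerivAt {p t : ℝ} (hp : 1 < p) (ht : |t| < 1) :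
    HasDerivAt (arcsinIntegral p) ((1 - |t| ^ p) ^ (-p⁻¹)) t := by
  have h1 : |t| ^ p < 1 := Real.rpow_lt_one (abs_nonneg t) ht (by linarith)
  have hev : arcsinDensity p =ᶠ[nhds t] fun s => (1 - |s| ^ p) ^ (-p⁻¹) := by
    filter_upwards [(continuous_abs.isOpen_preimage _ isOpen_Iio).mem_nhds
      (show t ∈ abs ⁻¹' Iio 1 from ht)] with s hs
    exact if_pos hs
  have hc : ContinuousAt (fun s : ℝ => (1 - |s| ^ p) ^ (-p⁻¹)) t := by
    refine ContinuousAt.rpow_const ?_ (Or.inl (by linarith))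
    exact continuousAt_const.sub (continuous_abs.continuousAt.rpow_const (Or.inr (by linarith)))
  have hm : Measurable (arcsinDensity p) := by
    unfold arcsinDensity
    exact Measurable.ite (measurableSet_lt (by fun_prop) (by fun_prop)) (by fun_prop) (by fun_prop)
  have := intervalIntegral.integral_hasDerivAt_right
    (arcsinDensity_intervalIntegrable hp 0 t)
    (hm.stronglyMeasurable.stronglyMeasurableAtFilter) (hc.congr_of_eventuallyEq hev)
  rwa [hev.eq_of_nhds] at this

/-- An odd, nonexpansive, strictly increasing solution of `u' = (1 - |u|^p)^(1/p)`. -/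
lemma exists_psin {p : ℝ} (hp : 1 < p) : ∃ u : ℝ → ℝ, StrictMono u ∧ LipschitzWith 1 u ∧
    (∀ t, u (-t) = -u t) ∧ u (Real.pi / (p * Real.sin (Real.pi / p))) = 1 ∧
    ∀ t, |u t| < 1 → HasDerivAt u ((1 - |u t| ^ p) ^ p⁻¹) t := by
  set e := (arcsinIntegral_strictMono hp).orderIsoOfSurjective _ (arcsinIntegral_surjective hp)
  have he : ∀ t, arcsinIntegral p (e.symm t) = t := fun t => e.apply_symm_apply t
  have he' : ∀ t, e.symm (arcsinIntegral p t) = t := fun t => e.symm_apply_apply t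
  refine ⟨e.symm, e.symm.strictMono, ?_, fun t => ?_, ?_, fun t ht => ?_⟩
  · refine LipschitzWith.of_le_add fun x y => ?_
    rcases le_total x y with h | h
    · have := e.symm.monotone h
      linarith [dist_nonneg (x := x) (y := y)]
    · have := sub_le_arcsinIntegral_sub hp (e.symm.monotone h)
      rw [he, he] at this
      rw [Real.dist_eq]
      linarith [le_abs_self (x - y)]
  · apply (arcsinIntegral_strictMono hp).injective
    rw [arcsinIntegral_neg, he, he]
  · rw [← (arcsinDensity_unit_integral hp).2]
    exact he' 1
  · have h1 : |e.symm t| ^ p < 1 := Real.rpow_lt_one (abs_nonneg _) ht (by linarith)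
    have := (arcsinIntegral_hasDerivAt hp ht).of_local_left_inverse
      e.symm.continuous.continuousAt (Real.rpow_pos_of_pos (by linarith) _).ne'
      (Filter.Eventually.of_forall he)
    rwa [Real.rpow_neg (by linarith), inv_inv] at this

lemma young_abs_rpow {p : ℝ} (hp : 1 < p) (a b : ℝ) :
    p * (|a| ^ (p - 2) * a) * b ≤ (p - 1) * |a| ^ p + |b| ^ p := by
  have hp0 : 0 < p := by linarith
  have h := Real.young_inequality b (|a| ^ (p - 2) * a) (Real.HolderConjugate.conjExponent hp)
  have h1 : |(|a| ^ (p - 2) * a)| ^ p.conjExponent = |a| ^ p := by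
    rcases eq_or_ne a 0 with rfl | ha
    · have : p.conjExponent ≠ 0 := (Real.HolderConjugate.conjExponent hp).symm.ne_zero
      simp [hp0.ne', this]
    · have ha' : 0 < |a| := abs_pos.2 ha
      rw [abs_mul, abs_of_pos (Real.rpow_pos_of_pos ha' _)]
      nth_rewrite 2 [← Real.rpow_one |a|]
      rw [← Real.rpow_add ha', ← Real.rpow_mul ha'.le, Real.conjExponent]
      congr 1
      have : p - 1 ≠ 0 := by linarith
      field_simp
      ring
  rw [h1, Real.conjExponent] at h
  have h2 : p * (|b| ^ p / p + |a| ^ p / (p / (p - 1))) = (p - 1) * |a| ^ p + |b| ^ p := by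
    field_simp
    ring
  calc _ = p * (b * (|a| ^ (p - 2) * a)) := by ring
    _ ≤ _ := by rw [← h2]; gcongr

lemma LipschitzOnWith.exists_abs_rpow {ψ : ℝ → ℝ} {K : NNReal} {p a b : ℝ} (hp : 1 < p)
    (hψ : LipschitzOnWith K ψ (Icc a b)) :
    ∃ K', LipschitzOnWith K' (fun s => |ψ s| ^ p) (Icc a b) := by
  have h1 : ContDiff ℝ 1 (fun x : ℝ => ‖x‖ ^ p) := contDiff_norm_rpow hp
  obtain ⟨K', hK'⟩ := h1.locallyLipschitz.locallyLipschitzOn.exists_lipschitzOnWith_of_compact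
    (isCompact_Icc.image_of_continuousOn hψ.continuousOn)
  exact ⟨_, by simpa [Function.comp_def] using! hK'.comp hψ (mapsTo_image _ _)⟩

lemma LipschitzOnWith.intervalIntegrable_abs_deriv_rpow {ψ : ℝ → ℝ} {K : NNReal} {p a b : ℝ}
    (hp : 0 < p) (hab : a ≤ b) (hψ : LipschitzOnWith K ψ (Icc a b)) :
    IntervalIntegrable (fun s => |deriv ψ s| ^ p) volume a b := by
  rw [intervalIntegrable_iff_integrableOn_Ioo_of_le hab]
  refine Measure.integrableOn_of_bounded (M := (K : ℝ) ^ p) measure_Ioo_lt_top.ne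
    ((measurable_deriv ψ).abs.pow_const p).aestronglyMeasurable ?_
  filter_upwards [ae_restrict_mem measurableSet_Ioo] with s hs
  have := norm_deriv_le_of_lipschitzOn (Icc_mem_nhds hs.1 hs.2) hψ
  rw [Real.norm_of_nonneg (by positivity)]
  gcongr
  simpa using this

/-- A positive solution of the Riccati equation gives a Poincaré inequality for functions vanishing
at the left endpoint. -/
lemma poincare_of_riccati {p L lam : ℝ} (hp : 1 < p) (hL : 0 < L) {v : ℝ → ℝ}
    (hv : ∀ s ∈ Icc 0 L, 0 < v s) (hvc : ContinuousOn v (Icc 0 L))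
    (hW : ∀ s ∈ Icc 0 L,
      HasDerivAt (fun s => v s ^ (p - 1)) (-lam - (p - 1) * v s ^ p) s)
    {ψ : ℝ → ℝ} {K : NNReal} (hψ : LipschitzOnWith K ψ (Icc 0 L)) (h0 : ψ 0 = 0) :
    lam * ∫ s in (0 : ℝ)..L, |ψ s| ^ p ≤ ∫ s in (0 : ℝ)..L, |deriv ψ s| ^ p := by
  have hp0 : 0 < p := by linarith
  have hu : uIcc 0 L = Icc 0 L := uIcc_of_le hL.le
  set W : ℝ → ℝ := fun s => v s ^ (p - 1) with hWdef
  set Ψ : ℝ → ℝ := fun s => |ψ s| ^ p with hΨdef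
  have hΨac : AbsolutelyContinuousOnInterval Ψ 0 L := by
    obtain ⟨K', hK'⟩ := hψ.exists_abs_rpow hp
    exact LipschitzOnWith.absolutelyContinuousOnInterval (hu ▸ hK')
  have hψac : AbsolutelyContinuousOnInterval ψ 0 L :=
    LipschitzOnWith.absolutelyContinuousOnInterval (hu ▸ hψ)
  have hWac : AbsolutelyContinuousOnInterval W 0 L := by
    have hcont : ContinuousOn (fun s => -lam - (p - 1) * v s ^ p) (Icc 0 L) :=
      continuousOn_const.sub (continuousOn_const.mul
        (hvc.rpow_const fun s hs => Or.inl (hv s hs).ne'))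
    obtain ⟨C, hC⟩ := isCompact_Icc.exists_bound_of_continuousOn hcont
    refine LipschitzOnWith.absolutelyContinuousOnInterval (K := C.toNNReal) (hu ▸ ?_)
    refine (convex_Icc 0 L).lipschitzOnWith_of_nnnorm_hasDerivWithin_le
      (fun s hs => (hW s hs).hasDerivWithinAt) fun s hs => ?_
    exact NNReal.le_toNNReal_of_coe_le (hC s hs)
  have hparts := hWac.integral_deriv_mul_eq_sub hΨac
  have hΨ0 : Ψ 0 = 0 := by simp [hΨdef, h0, hp0.ne']
  have hWL : 0 ≤ W L * Ψ L :=
    mul_nonneg (Real.rpow_nonneg (hv L ⟨hL.le, le_rfl⟩).le _) (by positivity)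
  have hi1 : IntervalIntegrable (fun s => deriv W s * Ψ s + W s * deriv Ψ s) volume 0 L :=
    (hWac.intervalIntegrable_deriv.mul_continuousOn hΨac.continuousOn).add
      (hΨac.intervalIntegrable_deriv.continuousOn_mul hWac.continuousOn)
  have hi2 : IntervalIntegrable (fun s => lam * Ψ s) volume 0 L :=
    hΨac.continuousOn.intervalIntegrable.const_mul _
  have hmono : (∫ s in (0 : ℝ)..L, (deriv W s * Ψ s + W s * deriv Ψ s) + lam * Ψ s) ≤
      ∫ s in (0 : ℝ)..L, |deriv ψ s| ^ p := by
    refine intervalIntegral.integral_mono_ae_restrict hL.le (hi1.add hi2)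
      (hψ.intervalIntegrable_abs_deriv_rpow hp0 hL.le) ?_
    filter_upwards [ae_restrict_of_ae hψac.ae_differentiableAt,
      ae_restrict_mem measurableSet_Icc] with s hs hsL
    have hd := (hs (hu ▸ hsL)).hasDerivAt
    have hdΨ : deriv Ψ s = p * |ψ s| ^ (p - 2) * ψ s * deriv ψ s :=
      ((hasDerivAt_abs_rpow (ψ s) hp).comp s hd).deriv
    have hvs := hv s hsL
    have hy := young_abs_rpow hp (v s * ψ s) (deriv ψ s)
    rw [abs_mul, abs_of_pos hvs, Real.mul_rpow hvs.le (abs_nonneg _),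
      Real.mul_rpow hvs.le (abs_nonneg _)] at hy
    have hvp : v s ^ (p - 1) = v s ^ (p - 2) * v s := by
      rw [← Real.rpow_add_one hvs.ne']; ring_nf
    simp only [(hW s hsL).deriv, hdΨ]
    simp only [hWdef, hΨdef, hvp]
    linarith
  rw [intervalIntegral.integral_add hi1 hi2, hparts, hΨ0,
    intervalIntegral.integral_const_mul] at hmono
  linarith

lemma riccati_hasDerivAt {p c s : ℝ} (hp : 1 < p) (hc : 0 < c) {U : ℝ → ℝ} (h0 : 0 < U s)
    (h1 : U s < 1) (hU : HasDerivAt U (c * (1 - U s ^ p) ^ p⁻¹) s) :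
    HasDerivAt (fun s => (c * (U s ^ (-p) - 1) ^ p⁻¹) ^ (p - 1))
      (-((p - 1) * c ^ p) - (p - 1) * (c * (U s ^ (-p) - 1) ^ p⁻¹) ^ p) s := by
  have hp0 : 0 < p := by linarith
  have hz : 0 < U s ^ (-p) - 1 :=
    sub_pos.2 (Real.one_lt_rpow_of_pos_of_lt_one_of_neg h0 h1 (by linarith))
  have hd := (((hU.rpow_const (p := -p) (Or.inl h0.ne')).sub_const 1).rpow_const (p := p⁻¹)
    (Or.inl hz.ne')).const_mul c
  have hd2 := hd.rpow_const (p := p - 1) (Or.inl (by positivity))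
  refine hd2.congr_deriv ?_
  have hUp : U s ^ p * U s ^ (-p) = 1 := by rw [← Real.rpow_add h0]; simp
  have hfac : (1 - U s ^ p) ^ p⁻¹ = U s * (U s ^ (-p) - 1) ^ p⁻¹ := by
    have : 1 - U s ^ p = U s ^ p * (U s ^ (-p) - 1) := by linear_combination -hUp
    rw [this, Real.mul_rpow (by positivity) hz.le, Real.rpow_rpow_inv h0.le hp0.ne']
  rw [hfac]
  set z := U s ^ (-p) - 1 with hzdef
  have hUz : U s ^ (-p - 1) * U s = z + 1 := by
    rw [← Real.rpow_add_one h0.ne']; simp [hzdef]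
  set y := z ^ p⁻¹ with hy
  have hypos : 0 < y := by positivity
  have hyp : y ^ p = z := by rw [hy, Real.rpow_inv_rpow hz.le hp0.ne']
  have hy1 : z ^ (p⁻¹ - 1) * z = y := by rw [← Real.rpow_add_one hz.ne']; simp [hy]
  have hcy : (c * y) ^ (p - 1 - 1) * (c * y) * (c * y) = c ^ p * z := by
    rw [← Real.rpow_add_one (by positivity), ← Real.rpow_add_one (by positivity), ← hyp,
      ← Real.mul_rpow hc.le hypos.le]
    ring_nf
  have hcy' : (c * y) ^ p = c ^ p * z := by rw [Real.mul_rpow hc.le hypos.le, hyp]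
  rw [hcy']
  apply mul_right_cancel₀ hz.ne'
  have e1 : p * p⁻¹ = 1 := mul_inv_cancel₀ hp0.ne'
  calc _ = -(p * p⁻¹) * (p - 1) * ((c * y) ^ (p - 1 - 1) * c * (c * y)) *
        (z ^ (p⁻¹ - 1) * z) * (U s ^ (-p - 1) * U s) := by ring
    _ = -(p - 1) * ((c * y) ^ (p - 1 - 1) * (c * y) * (c * y)) * (z + 1) := by
      rw [hy1, hUz, e1]; ring
    _ = _ := by rw [hcy]; ring

lemma pi_div_mul_sin_pos {p : ℝ} (hp : 1 < p) : 0 < Real.pi / (p * Real.sin (Real.pi / p)) := by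
  have : 0 < Real.sin (Real.pi / p) := Real.sin_pos_of_pos_of_lt_pi
    (div_pos Real.pi_pos (by linarith)) (div_lt_self Real.pi_pos hp)
  have := Real.pi_pos
  positivity

/-- The sharp Poincaré inequality for functions vanishing at the left endpoint. -/
lemma poincare_of_zero_left {p L : ℝ} (hp : 1 < p) (hL : 0 < L) {ψ : ℝ → ℝ} {K : NNReal}
    (hψ : LipschitzOnWith K ψ (Icc 0 L)) (h0 : ψ 0 = 0) :
    (p - 1) * (Real.pi / (p * Real.sin (Real.pi / p)) / L) ^ p * ∫ s in (0 : ℝ)..L, |ψ s| ^ p ≤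
      ∫ s in (0 : ℝ)..L, |deriv ψ s| ^ p := by
  have hp0 : 0 < p := by linarith
  obtain ⟨u, hmono, hlip, hodd, hone, hderiv⟩ := exists_psin hp
  set T := Real.pi / (p * Real.sin (Real.pi / p))
  have hT : 0 < T := pi_div_mul_sin_pos hp
  have hu0 : u 0 = 0 := by have := hodd 0; simp at this; linarith
  have key : ∀ δ ∈ Ioo 0 (T / 2), (p - 1) * ((T - 2 * δ) / L) ^ p *
      (∫ s in (0 : ℝ)..L, |ψ s| ^ p) ≤ ∫ s in (0 : ℝ)..L, |deriv ψ s| ^ p := by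
    intro δ hδ
    set c := (T - 2 * δ) / L
    have hc : 0 < c := div_pos (by linarith [hδ.2]) hL
    have hcL : c * L = T - 2 * δ := div_mul_cancel₀ _ hL.ne'
    have hU0 : ∀ s ∈ Icc 0 L, 0 < u (c * s + δ) := fun s hs => by
      rw [← hu0]
      exact hmono (by have := mul_nonneg hc.le hs.1; linarith [hδ.1])
    have hU1 : ∀ s ∈ Icc 0 L, u (c * s + δ) < 1 := fun s hs => by
      rw [← hone]
      exact hmono (by have := mul_le_mul_of_nonneg_left hs.2 hc.le; linarith [hδ.1])
    have hUp : ∀ s ∈ Icc 0 L, 0 < u (c * s + δ) ^ (-p) - 1 := fun s hs =>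
      sub_pos.2 (Real.one_lt_rpow_of_pos_of_lt_one_of_neg (hU0 s hs) (hU1 s hs) (by linarith))
    refine poincare_of_riccati hp hL (v := fun s => c * (u (c * s + δ) ^ (-p) - 1) ^ p⁻¹)
      (fun s hs => mul_pos hc (Real.rpow_pos_of_pos (hUp s hs) _)) ?_ (fun s hs => ?_) hψ h0
    · refine continuousOn_const.mul (ContinuousOn.rpow_const (ContinuousOn.sub
        (ContinuousOn.rpow_const ?_ fun s hs => Or.inl (hU0 s hs).ne') continuousOn_const)
        fun s hs => Or.inl (hUp s hs).ne')
      exact (hlip.continuous.comp (by fun_prop)).continuousOn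
    · refine riccati_hasDerivAt (U := fun s => u (c * s + δ)) hp hc (hU0 s hs) (hU1 s hs) ?_
      have h1 := hderiv (c * s + δ) (by rw [abs_of_pos (hU0 s hs)]; exact hU1 s hs)
      rw [abs_of_pos (hU0 s hs)] at h1
      have h2 : HasDerivAt (fun s => c * s + δ) c s := by
        simpa using ((hasDerivAt_id s).const_mul c).add_const δ
      exact (h1.comp s h2).congr_deriv (mul_comm _ _)
  have hlim : Filter.Tendsto (fun δ => (p - 1) * ((T - 2 * δ) / L) ^ p *
      (∫ s in (0 : ℝ)..L, |ψ s| ^ p)) (nhdsWithin 0 (Ioi 0))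
      (nhds ((p - 1) * ((T - 2 * 0) / L) ^ p * (∫ s in (0 : ℝ)..L, |ψ s| ^ p))) := by
    refine Filter.Tendsto.mono_left (ContinuousAt.tendsto ?_) nhdsWithin_le_nhds
    exact (continuousAt_const.mul (ContinuousAt.rpow_const (by fun_prop)
      (Or.inr hp0.le))).mul continuousAt_const
  rw [mul_zero, sub_zero] at hlim
  exact le_of_tendsto hlim
    (Filter.mem_of_superset (Ioo_mem_nhdsGT (half_pos hT)) key)

/-- The sharp Poincaré inequality for functions vanishing at the midpoint. -/
lemma poincare_of_zero_mid {p L : ℝ} (hp : 1 < p) (hL : 0 < L) {ψ : ℝ → ℝ} {K : NNReal}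
    (hψ : LipschitzOnWith K ψ (Icc (-L) L)) (h0 : ψ 0 = 0) :
    (p - 1) * (Real.pi / (p * Real.sin (Real.pi / p)) / L) ^ p * ∫ s in (-L)..L, |ψ s| ^ p ≤
      ∫ s in (-L)..L, |deriv ψ s| ^ p := by
  have hp0 : 0 < p := by linarith
  have hl := hψ.mono (Icc_subset_Icc_right (by linarith) : Icc (-L) 0 ⊆ Icc (-L) L)
  have hr := hψ.mono (Icc_subset_Icc_left (by linarith) : Icc 0 L ⊆ Icc (-L) L)
  have hneg : LipschitzOnWith K (fun s => ψ (-s)) (Icc 0 L) := fun x hx y hy => by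
    simpa [edist_neg_neg] using hl (x := -x) (by constructor <;> linarith [hx.1, hx.2])
      (y := -y) (by constructor <;> linarith [hy.1, hy.2])
  have h1 := poincare_of_zero_left hp hL hr h0
  have h2 := poincare_of_zero_left hp hL hneg (by simpa using h0)
  simp only [deriv_comp_neg, abs_neg] at h2
  rw [intervalIntegral.integral_comp_neg (fun s => |ψ s| ^ p),
    intervalIntegral.integral_comp_neg (fun s => |deriv ψ s| ^ p), neg_zero] at h2
  have hi : ∀ {a b : ℝ}, a ≤ b → LipschitzOnWith K ψ (Icc a b) →
      IntervalIntegrable (fun s => |ψ s| ^ p) volume a b := fun hab h =>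
    ContinuousOn.intervalIntegrable (by
      rw [uIcc_of_le hab]
      exact h.continuousOn.abs.rpow_const fun _ _ => Or.inr hp0.le)
  rw [← intervalIntegral.integral_add_adjacent_intervals (hi (by linarith) hl) (hi hL.le hr),
    ← intervalIntegral.integral_add_adjacent_intervals
      (hl.intervalIntegrable_abs_deriv_rpow hp0 (by linarith))
      (hr.intervalIntegrable_abs_deriv_rpow hp0 hL.le), mul_add]
  exact add_le_add h2 h1

lemma sgnPow_eq (p x : ℝ) : sgnPow (p - 1) x = |x| ^ (p - 2) * x := by
  unfold sgnPow
  rcases eq_or_ne x 0 with rfl | hx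
  · simp
  · have h : |x| ^ (p - 1) = |x| ^ (p - 2) * |x| := by
      rw [← Real.rpow_add_one (abs_pos.2 hx).ne']; ring_nf
    rw [h]
    rcases lt_or_gt_of_ne hx with hx | hx
    · rw [Real.sign_of_neg hx, abs_of_neg hx]; ring
    · rw [Real.sign_of_pos hx, abs_of_pos hx]; ring

lemma abs_rpow_sub_two_mul_self_mul_self {p : ℝ} (hp : p ≠ 0) (x : ℝ) :
    |x| ^ (p - 2) * x * x = |x| ^ p := by
  rcases eq_or_ne x 0 with rfl | hx
  · simp [hp]
  · rw [mul_assoc, ← abs_mul_abs_self, ← mul_assoc, ← Real.rpow_add_one (abs_pos.2 hx).ne',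
      ← Real.rpow_add_one (abs_pos.2 hx).ne']
    ring_nf

lemma abs_rpow_sub_le {p : ℝ} (hp : 1 < p) (x c : ℝ) :
    |x| ^ p - p * c * sgnPow (p - 1) x ≤ |x - c| ^ p := by
  have h := young_abs_rpow hp x (x - c)
  rw [← sgnPow_eq] at h
  have h2 : sgnPow (p - 1) x * x = |x| ^ p := by
    rw [sgnPow_eq, abs_rpow_sub_two_mul_self_mul_self (by linarith)]
  linear_combination h - p * h2

lemma continuous_sgnPow_s15 {p : ℝ} (hp : 1 < p) : Continuous (sgnPow (p - 1)) := by
  have h : sgnPow (p - 1) = fun x => p⁻¹ * deriv (fun x : ℝ => ‖x‖ ^ p) x := by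
    ext x
    simp only [Real.norm_eq_abs, (hasDerivAt_abs_rpow x hp).deriv, sgnPow_eq]
    have : p ≠ 0 := by linarith
    field_simp
  rw [h]
  exact continuous_const.mul ((contDiff_norm_rpow hp).continuous_deriv le_rfl)

/-- Shifting a function with vanishing `|φ|^{p-2} φ`-mean does not decrease its `L^p` norm. -/
lemma integral_abs_rpow_le_of_mean_zero {p a b : ℝ} (hp : 1 < p) (hab : a ≤ b) {φ : ℝ → ℝ}
    (hφ : ContinuousOn φ (Icc a b)) (h0 : ∫ s in a..b, sgnPow (p - 1) (φ s) = 0) (c : ℝ) :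
    ∫ s in a..b, |φ s| ^ p ≤ ∫ s in a..b, |φ s - c| ^ p := by
  rw [← uIcc_of_le hab] at hφ
  have hi : ∀ {f : ℝ → ℝ}, ContinuousOn f (uIcc a b) →
      IntervalIntegrable (fun s => |f s| ^ p) volume a b := fun hf =>
    (hf.abs.rpow_const fun _ _ => Or.inr (by linarith)).intervalIntegrable
  have his : IntervalIntegrable (fun s => p * c * sgnPow (p - 1) (φ s)) volume a b :=
    ((continuous_sgnPow_s15 hp).comp_continuousOn hφ).intervalIntegrable.const_mul _
  have h := intervalIntegral.integral_mono_on hab ((hi hφ).sub his)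
    (hi (hφ.sub (continuousOn_const (c := c)))) fun s _ => abs_rpow_sub_le hp (φ s) c
  rwa [intervalIntegral.integral_sub (hi hφ) his, intervalIntegral.integral_const_mul, h0,
    mul_zero, sub_zero] at h

lemma integral_abs_rpow_pos {p a b : ℝ} (hp : 0 < p) (hab : a < b) {φ : ℝ → ℝ}
    (hφ : ContinuousOn φ (Icc a b)) (hne : ¬ ∀ s ∈ Icc a b, φ s = 0) :
    0 < ∫ s in a..b, |φ s| ^ p := by
  push Not at hne
  obtain ⟨s, hs, hs0⟩ := hne
  exact intervalIntegral.integral_pos hab (hφ.abs.rpow_const fun _ _ => Or.inr hp.le)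
    (fun _ _ => by positivity) ⟨s, hs, Real.rpow_pos_of_pos (abs_pos.2 hs0) _⟩

/-- The Rayleigh quotient is attained by the `p`-sine function. -/
lemma exists_rayleigh_extremal {p L : ℝ} (hp : 1 < p) (hL : 0 < L) : ∃ φ : ℝ → ℝ,
    LipschitzOnWith (Real.pi / (p * Real.sin (Real.pi / p)) / L).toNNReal φ (Icc (-L) L) ∧
    (¬ ∀ s ∈ Icc (-L) L, φ s = 0) ∧ (∫ s in (-L)..L, sgnPow (p - 1) (φ s)) = 0 ∧
    ∫ s in (-L)..L, |deriv φ s| ^ p =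
      (p - 1) * (Real.pi / (p * Real.sin (Real.pi / p)) / L) ^ p * ∫ s in (-L)..L, |φ s| ^ p := by
  have hp0 : 0 < p := by linarith
  obtain ⟨u, hmono, hlip, hodd, hone, hderiv⟩ := exists_psin hp
  set T := Real.pi / (p * Real.sin (Real.pi / p))
  have hT : 0 < T := pi_div_mul_sin_pos hp
  set c := T / L
  have hc : 0 < c := div_pos hT hL
  have hcL : c * L = T := div_mul_cancel₀ _ hL.ne'
  have hcont : Continuous fun s => u (c * s) := hlip.continuous.comp (by fun_prop)
  have hlt : ∀ s ∈ Ioo (-L) L, |u (c * s)| < 1 := fun s hs => by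
    rw [abs_lt, ← hone, ← hodd]
    constructor <;> apply hmono
    · have := mul_lt_mul_of_pos_left hs.1 hc; linarith
    · have := mul_lt_mul_of_pos_left hs.2 hc; linarith
  have hd : ∀ s ∈ Ioo (-L) L,
      HasDerivAt (fun s => u (c * s)) (c * (1 - |u (c * s)| ^ p) ^ p⁻¹) s := fun s hs => by
    have h2 : HasDerivAt (fun s => c * s) c s := by simpa using (hasDerivAt_id s).const_mul c
    exact ((hderiv _ (hlt s hs)).comp s h2).congr_deriv (mul_comm _ _)
  have hpow : ∀ s ∈ Ioo (-L) L, 0 < 1 - |u (c * s)| ^ p := fun s hs =>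
    sub_pos.2 (Real.rpow_lt_one (abs_nonneg _) (hlt s hs) hp0)
  refine ⟨fun s => u (c * s), ?_, ?_, ?_, ?_⟩
  · have h := hlip.comp (LipschitzWith.of_dist_le_mul (K := c.toNNReal) (f := fun s : ℝ => c * s)
      fun x y => by
        rw [Real.dist_eq, Real.dist_eq, ← mul_sub, abs_mul, abs_of_pos hc,
          Real.coe_toNNReal _ hc.le])
    rw [one_mul] at h
    exact h.lipschitzOnWith
  · intro h
    have : u (c * L) = 0 := h L ⟨by linarith, le_rfl⟩
    rw [hcL, hone] at this
    exact one_ne_zero this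
  · have h := intervalIntegral.integral_comp_neg (a := -L) (b := L)
      fun s => sgnPow (p - 1) (u (c * s))
    simp only [mul_neg, hodd, sgnPow_eq, abs_neg, intervalIntegral.integral_neg, neg_neg] at h ⊢
    linarith
  · have hi : IntervalIntegrable (fun s => |u (c * s)| ^ p) volume (-L) L :=
      (hcont.abs.rpow_const fun _ => Or.inr hp0.le).intervalIntegrable _ _
    have hA : ∫ s in (-L)..L, |deriv (fun s => u (c * s)) s| ^ p =
        ∫ s in (-L)..L, c ^ p * (1 - |u (c * s)| ^ p) := by
      refine intervalIntegral.integral_congr_Ioo_of_le (by linarith) fun s hs => ?_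
      have := (hpow s hs).le
      simp only [(hd s hs).deriv]
      rw [abs_of_nonneg (by positivity), Real.mul_rpow hc.le (by positivity),
        Real.rpow_inv_rpow this hp0.ne']
    have hB : ∫ s in (-L)..L, c * (1 - p * |u (c * s)| ^ p) = 0 := by
      have := intervalIntegral.integral_eq_sub_of_hasDerivAt_of_le (a := -L) (b := L)
        (f := fun s => u (c * s) * (1 - |u (c * s)| ^ p) ^ ((p - 1) / p))
        (f' := fun s => c * (1 - p * |u (c * s)| ^ p)) (by linarith) ?_ ?_
        ((intervalIntegrable_const.sub (hi.const_mul p)).const_mul c)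
      · rw [this]
        have : (p - 1) / p ≠ 0 := (div_pos (by linarith) hp0).ne'
        simp [hcL, hone, hodd, Real.zero_rpow this]
      · refine (hcont.mul (Continuous.rpow_const ?_ fun s => Or.inr ?_)).continuousOn
        · exact continuous_const.sub (hcont.abs.rpow_const fun _ => Or.inr hp0.le)
        · exact div_nonneg (by linarith) hp0.le
      · intro s hs
        have hz := hpow s hs
        have hab := ((hasDerivAt_abs_rpow (u (c * s)) hp).comp s (hd s hs)).const_sub 1
        have h := (hd s hs).mul (hab.rpow_const (p := (p - 1) / p) (Or.inl hz.ne'))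
        refine h.congr_deriv ?_
        simp only [Function.comp_apply]
        have huu := abs_rpow_sub_two_mul_self_mul_self hp0.ne' (u (c * s))
        set x := u (c * s)
        set z := 1 - |x| ^ p with hzdef
        have e1 : z ^ p⁻¹ * z ^ ((p - 1) / p) = z := by
          rw [← Real.rpow_add hz]
          have : p⁻¹ + (p - 1) / p = 1 := by field_simp; ring
          rw [this, Real.rpow_one]
        have e2 : z ^ p⁻¹ * z ^ ((p - 1) / p - 1) = 1 := by
          rw [← Real.rpow_add hz]
          have : p⁻¹ + ((p - 1) / p - 1) = 0 := by field_simp; ring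
          rw [this, Real.rpow_zero]
        have e3 : p * ((p - 1) / p) = p - 1 := by field_simp
        calc _ = c * (z ^ p⁻¹ * z ^ ((p - 1) / p)) - c * (p * ((p - 1) / p)) *
              (|x| ^ (p - 2) * x * x) * (z ^ p⁻¹ * z ^ ((p - 1) / p - 1)) := by ring
          _ = _ := by rw [e1, e2, e3, huu, hzdef]; ring
    rw [hA]
    rw [intervalIntegral.integral_const_mul, intervalIntegral.integral_sub
      intervalIntegrable_const (hi.const_mul p), intervalIntegral.integral_const_mul,
      mul_eq_zero, or_iff_right hc.ne'] at hB
    rw [intervalIntegral.integral_const_mul, intervalIntegral.integral_sub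
      intervalIntegrable_const hi]
    linear_combination c ^ p * hB

/-- **Sharp one-dimensional `p`-Poincaré–Wirtinger constant.**
For `1 < p < ∞` and `D > 0`, with `π_p = 2π / (p sin(π/p))`, one has
`μ_p(0, D) = (p - 1) (π_p / D)^p`. -/
theorem rayleighNeumann_zero_eq (p D : ℝ) (hp : 1 < p) (hD : 0 < D) :
    rayleighNeumann p 0 D
      = (p - 1) * ((2 * Real.pi / (p * Real.sin (Real.pi / p))) / D) ^ p := by
  have hp0 : 0 < p := by linarith
  have hL : 0 < D / 2 := half_pos hD
  have hconst : 2 * Real.pi / (p * Real.sin (Real.pi / p)) / D =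
      Real.pi / (p * Real.sin (Real.pi / p)) / (D / 2) := by
    rw [mul_div_assoc, div_div_eq_mul_div, mul_comm]
  rw [hconst, rayleighNeumann]
  simp only [neg_zero, zero_mul, zero_div, Real.exp_zero, mul_one]
  refine IsLeast.csInf_eq ⟨?_, ?_⟩
  · obtain ⟨φ, hlip, hne, hmean, hval⟩ := exists_rayleigh_extremal hp hL
    refine ⟨φ, ⟨_, hlip⟩, hne, hmean, ?_⟩
    rw [hval, mul_div_cancel_right₀]
    exact (integral_abs_rpow_pos hp0 (by linarith) hlip.continuousOn hne).ne'
  · rintro r ⟨φ, ⟨K, hlip⟩, hne, hmean, rfl⟩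
    rw [le_div_iff₀ (integral_abs_rpow_pos hp0 (by linarith) hlip.continuousOn hne)]
    have hψ : LipschitzOnWith K (fun s => φ s - φ 0) (Icc (-(D / 2)) (D / 2)) :=
      fun x hx y hy => by simpa using hlip hx hy
    have h := poincare_of_zero_mid hp hL hψ (by simp)
    simp only [deriv_sub_const] at h
    refine le_trans (mul_le_mul_of_nonneg_left ?_ ?_) h
    · exact integral_abs_rpow_le_of_mean_zero hp (by linarith) hlip.continuousOn hmean (φ 0)
    · have := pi_div_mul_sin_pos hp
      exact mul_nonneg (by linarith) (by positivity)
end
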